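/- arXiv:2410.19270 — 2 statements merged into one kernel-verified Lean document; each statement's English description precedes it below -/
import Mathlib

section
/- Let H and K be complex separable Hilbert spaces and let Φ: T(H) → T(K) be a quantum channel. Then Φ admits a Holevo form, i.e. Φ(X) = Σ_{k=1}^∞ Tr(F_k X) R_k for some states R_k ∈ S(K) and positive operators F_k ∈ B(H) with Σ_{k=1}^∞ F_k = I_H, if and only if Φ admits an operator-sum representation by rank-one operations, i.e. Φ(X) = Σ_{k=1}^∞ (⟨v_k, X v_k⟩) u_k u_k* for some unit vectors {u_k} ⊆ K and vectors {v_k} ⊆ H with Σ_{k=1}^∞ v_k v_k* = I_H (sum in the strong operator topology). -/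
noncomputable section

open scoped ComplexInnerProductSpace
open ContinuousLinearMap Filter Topology

/-- The rank-one operator `u v*`, i.e. `x ↦ ⟪v, x⟫ • u`. -/
def rankOne {H K : Type*} [NormedAddCommGroup H] [InnerProductSpace ℂ H]
    [NormedAddCommGroup K] [InnerProductSpace ℂ K] (u : K) (v : H) : H →L[ℂ] K :=
  (ContinuousLinearMap.toSpanSingleton ℂ u).comp (innerSL ℂ v)

/-- An operator is trace class iff the sums `∑ |⟪f i, T (e i)⟫|` over finite orthonormal
families are uniformly bounded (the supremum being the trace norm). -/
def IsTraceClass {H K : Type*} [NormedAddCommGroup H] [InnerProductSpace ℂ H]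
    [NormedAddCommGroup K] [InnerProductSpace ℂ K] (T : H →L[ℂ] K) : Prop :=
  ∃ C : ℝ, ∀ (n : ℕ) (e : Fin n → H) (f : Fin n → K),
    Orthonormal ℂ e → Orthonormal ℂ f → (∑ i, ‖⟪f i, T (e i)⟫‖) ≤ C

/-- The trace norm of an operator. -/
def traceNorm {H K : Type*} [NormedAddCommGroup H] [InnerProductSpace ℂ H]
    [NormedAddCommGroup K] [InnerProductSpace ℂ K] (T : H →L[ℂ] K) : ℝ :=
  sSup { r : ℝ | ∃ (n : ℕ) (e : Fin n → H) (f : Fin n → K),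
    Orthonormal ℂ e ∧ Orthonormal ℂ f ∧ r = ∑ i, ‖⟪f i, T (e i)⟫‖ }

/-- A fixed Hilbert basis of a Hilbert space. -/
def stdONB (H : Type*) [NormedAddCommGroup H] [InnerProductSpace ℂ H] [CompleteSpace H] :
    HilbertBasis (exists_hilbertBasis ℂ H).choose ℂ H :=
  (exists_hilbertBasis ℂ H).choose_spec.choose

/-- The trace of a (trace-class) operator. -/
def Tr {H : Type*} [NormedAddCommGroup H] [InnerProductSpace ℂ H] [CompleteSpace H]
    (T : H →L[ℂ] H) : ℂ :=
  ∑' i, ⟪stdONB H i, T (stdONB H i)⟫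

/-- Convergence of a series of operators in trace norm. -/
def HasSumTN {H K : Type*} [NormedAddCommGroup H] [InnerProductSpace ℂ H]
    [NormedAddCommGroup K] [InnerProductSpace ℂ K] {ι : Type*}
    (f : ι → (H →L[ℂ] K)) (T : H →L[ℂ] K) : Prop :=
  Filter.Tendsto (fun s : Finset ι => traceNorm (T - ∑ k ∈ s, f k)) Filter.atTop (nhds 0)

/-- A state: a positive trace-class operator with trace one. -/
def IsState {H : Type*} [NormedAddCommGroup H] [InnerProductSpace ℂ H] [CompleteSpace H]
    (ρ : H →L[ℂ] H) : Prop :=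
  IsTraceClass ρ ∧ ρ.IsPositive ∧ Tr ρ = 1

/-- Positivity of a finite matrix of operators, viewed as a block operator. -/
def MatPos {H : Type*} [NormedAddCommGroup H] [InnerProductSpace ℂ H] {n : ℕ}
    (M : Fin n → Fin n → (H →L[ℂ] H)) : Prop :=
  ∀ x : Fin n → H,
    0 ≤ (∑ i, ∑ j, ⟪x i, M i j (x j)⟫).re ∧ (∑ i, ∑ j, ⟪x i, M i j (x j)⟫).im = 0

/-- Complete positivity of a linear map on trace-class operators. -/
def IsCompletelyPositive {H K : Type*} [NormedAddCommGroup H] [InnerProductSpace ℂ H]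
    [NormedAddCommGroup K] [InnerProductSpace ℂ K]
    (Φ : (H →L[ℂ] H) →ₗ[ℂ] (K →L[ℂ] K)) : Prop :=
  ∀ (n : ℕ) (M : Fin n → Fin n → (H →L[ℂ] H)),
    (∀ i j, IsTraceClass (M i j)) → MatPos M → MatPos fun i j => Φ (M i j)

/-- A quantum channel: a completely positive trace-preserving linear map on
trace-class operators. -/
structure IsChannel {H K : Type*} [NormedAddCommGroup H] [InnerProductSpace ℂ H]
    [CompleteSpace H] [NormedAddCommGroup K] [InnerProductSpace ℂ K] [CompleteSpace K]
    (Φ : (H →L[ℂ] H) →ₗ[ℂ] (K →L[ℂ] K)) : Prop where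
  maps_traceClass : ∀ X : H →L[ℂ] H, IsTraceClass X → IsTraceClass (Φ X)
  completelyPositive : IsCompletelyPositive Φ
  tracePreserving : ∀ X : H →L[ℂ] H, IsTraceClass X → Tr (Φ X) = Tr X

/-- Strongly entanglement breaking channel: admits a Holevo (measure-and-prepare) form
`Φ(X) = ∑ₖ Tr(Fₖ X) Rₖ` with states `Rₖ` and positive `Fₖ` with `∑ₖ Fₖ = I` (SOT). -/
def IsSEB {H K : Type*} [NormedAddCommGroup H] [InnerProductSpace ℂ H] [CompleteSpace H]
    [NormedAddCommGroup K] [InnerProductSpace ℂ K] [CompleteSpace K]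
    (Φ : (H →L[ℂ] H) →ₗ[ℂ] (K →L[ℂ] K)) : Prop :=
  ∃ (R : ℕ → (K →L[ℂ] K)) (F : ℕ → (H →L[ℂ] H)),
    (∀ k, IsState (R k)) ∧ (∀ k, (F k).IsPositive) ∧
    (∀ x : H, HasSum (fun k => F k x) x) ∧
    ∀ X : H →L[ℂ] H, IsTraceClass X → HasSumTN (fun k => Tr (F k * X) • R k) (Φ X)

/-- The weak* topology on `B(H)`, induced by the pairing with trace-class operators. -/
def weakStarTopology (H : Type*) [NormedAddCommGroup H] [InnerProductSpace ℂ H]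
    [CompleteSpace H] : TopologicalSpace (H →L[ℂ] H) :=
  TopologicalSpace.induced
    (fun Y => fun X : { X : H →L[ℂ] H // IsTraceClass X } => Tr ((X : H →L[ℂ] H) * Y))
    inferInstance

/-!
From a Holevo form, decompose `F k = ∑ i, w k i (w k i)*` and
`R k = ∑ j, c k j ^ 2 • u k j (u k j)*` with unit vectors `u k j`. As
`∑ j, c k j ^ 2 = Tr (R k) = 1`, the weights can be moved to the other side: the vectors
`c k j • w k i` still decompose the identity, and together with the `u k j` they give the rank-one
representation.

The key fact is that `F = ∑ i, v i (v i)*` in the weak sense implies `Tr (F X) = ∑ i, ⟪v i, X v i⟫`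
for every trace-class `X`. For `X ≥ 0` it amounts to exchanging a double sum of nonnegative terms;
the general case follows because the trace-class operators form an ideal (bounded operators are
spanned by unitaries), so that they are spanned by their positive elements.
-/

section TraceClass

variable {H K : Type*} [NormedAddCommGroup H] [InnerProductSpace ℂ H]
  [NormedAddCommGroup K] [InnerProductSpace ℂ K]

/-- The trace-class operators `H → K` as a linear subspace of the bounded operators. -/
def traceClass (H K : Type*) [NormedAddCommGroup H] [InnerProductSpace ℂ H]
    [NormedAddCommGroup K] [InnerProductSpace ℂ K] : Submodule ℂ (H →L[ℂ] K) where
  carrier := {T | IsTraceClass T}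
  zero_mem' := ⟨0, fun n e f _ _ => by simp⟩
  add_mem' := by
    rintro S T ⟨C, hC⟩ ⟨D, hD⟩
    refine ⟨C + D, fun n e f he hf => le_trans ?_ (add_le_add (hC n e f he hf) (hD n e f he hf))⟩
    rw [← Finset.sum_add_distrib]
    exact Finset.sum_le_sum fun i _ => by simpa [inner_add_right] using norm_add_le _ _
  smul_mem' := by
    rintro c T ⟨C, hC⟩
    refine ⟨‖c‖ * C, fun n e f he hf => ?_⟩
    simpa [inner_smul_right, Finset.mul_sum] using
      mul_le_mul_of_nonneg_left (hC n e f he hf) (norm_nonneg c)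

theorem mem_traceClass {T : H →L[ℂ] K} : T ∈ traceClass H K ↔ IsTraceClass T := Iff.rfl

namespace IsTraceClass

theorem sum_norm_inner_le {ι : Type*} {T : H →L[ℂ] K} {C : ℝ}
    (hC : ∀ (n : ℕ) (e : Fin n → H) (f : Fin n → K),
      Orthonormal ℂ e → Orthonormal ℂ f → (∑ i, ‖⟪f i, T (e i)⟫‖) ≤ C)
    {e : ι → H} {f : ι → K} (he : Orthonormal ℂ e) (hf : Orthonormal ℂ f) (s : Finset ι) :
    ∑ i ∈ s, ‖⟪f i, T (e i)⟫‖ ≤ C := by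
  have hinj : Function.Injective fun j => (s.equivFin.symm j : ι) :=
    Subtype.val_injective.comp s.equivFin.symm.injective
  calc ∑ i ∈ s, ‖⟪f i, T (e i)⟫‖
      = ∑ j, ‖⟪f (s.equivFin.symm j), T (e (s.equivFin.symm j))⟫‖ := by
        rw [← Finset.sum_coe_sort]
        exact (s.equivFin.symm.sum_comp fun i : s => ‖⟪f i, T (e i)⟫‖).symm
    _ ≤ C := hC _ _ _ (he.comp _ hinj) (hf.comp _ hinj)

theorem summable_inner {ι : Type*} {T : H →L[ℂ] K} (hT : IsTraceClass T) {e : ι → H} {f : ι → K}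
    (he : Orthonormal ℂ e) (hf : Orthonormal ℂ f) : Summable fun i => ⟪f i, T (e i)⟫ :=
  let ⟨_, hC⟩ := hT
  .of_norm (summable_of_sum_le (fun _ => norm_nonneg _) (sum_norm_inner_le hC he hf))

variable [CompleteSpace K]

theorem unitary_comp {T : H →L[ℂ] K} (hT : IsTraceClass T) (U : unitary (K →L[ℂ] K)) :
    IsTraceClass ((U : K →L[ℂ] K) ∘L T) := by
  obtain ⟨C, hC⟩ := hT
  refine ⟨C, fun n e f he hf => ?_⟩
  have hUf : Orthonormal ℂ fun i => star (U : K →L[ℂ] K) (f i) :=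
    hf.comp_linearIsometryEquiv (Unitary.linearIsometryEquiv (star U))
  refine (hC n e _ he hUf).trans' (Finset.sum_le_sum fun i _ => le_of_eq ?_)
  rw [comp_apply, ← adjoint_inner_left]
  rfl

theorem clm_comp {T : H →L[ℂ] K} (hT : IsTraceClass T) (A : K →L[ℂ] K) :
    IsTraceClass (A ∘L T) := by
  have hA : A ∈ Submodule.span ℂ (unitary (K →L[ℂ] K) : Set (K →L[ℂ] K)) := by
    simp only [CStarAlgebra.span_unitary, Submodule.mem_top]
  rw [← mem_traceClass]
  induction hA using Submodule.span_induction with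
  | mem U hU => exact hT.unitary_comp ⟨U, hU⟩
  | zero => rw [zero_comp]; exact zero_mem _
  | add A B _ _ hA hB => exact add_comp A B T ▸ (traceClass H K).add_mem hA hB
  | smul c A _ hA => exact smul_comp c A T ▸ (traceClass H K).smul_mem c hA

variable [CompleteSpace H]

theorem adjoint {T : H →L[ℂ] K} (hT : IsTraceClass T) :
    IsTraceClass (ContinuousLinearMap.adjoint T) := by
  obtain ⟨C, hC⟩ := hT
  refine ⟨C, fun n e f he hf => (hC n f e hf he).trans' (Finset.sum_le_sum fun i _ => ?_)⟩
  rw [adjoint_inner_right, norm_inner_symm]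

theorem comp_clm {T : H →L[ℂ] K} (hT : IsTraceClass T) (A : H →L[ℂ] H) :
    IsTraceClass (T ∘L A) := by
  simpa only [adjoint_comp, adjoint_adjoint] using
    (hT.adjoint.clm_comp (ContinuousLinearMap.adjoint A)).adjoint

theorem const_mul {T : H →L[ℂ] H} (hT : IsTraceClass T) (A : H →L[ℂ] H) : IsTraceClass (A * T) :=
  hT.clm_comp A

theorem mul_const {T : H →L[ℂ] H} (hT : IsTraceClass T) (A : H →L[ℂ] H) : IsTraceClass (T * A) :=
  hT.comp_clm A

-- The projection onto the kernel of `Y⁻` sends `Y = Y⁺ - Y⁻` to `Y⁺`.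
theorem posPart {Y : H →L[ℂ] H} (hY : IsTraceClass Y) (hs : IsSelfAdjoint Y) :
    IsTraceClass Y⁺ := by
  set p := Y⁻.ker.starProjection
  have hpos : p ∘L Y⁺ = Y⁺ := by
    ext x
    refine Submodule.starProjection_eq_self_iff.2 ?_
    exact congr($(CFC.negPart_mul_posPart Y) x)
  have hneg : p ∘L Y⁻ = 0 := by
    ext x
    refine (Submodule.starProjection_apply_eq_zero_iff _).2 fun z hz => ?_
    have hz : Y⁻ z = 0 := hz
    have hadj := (CFC.negPart_nonneg Y).isSelfAdjoint.adjoint_eq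
    rw [coe_coe, ← hadj, adjoint_inner_right, hz, inner_zero_left]
  have h : p ∘L Y = Y⁺ := by
    conv_lhs => rw [← CFC.posPart_sub_negPart Y hs]
    rw [comp_sub, hpos, hneg, sub_zero]
  exact h ▸ hY.clm_comp p

@[elab_as_elim]
theorem induction_on_nonneg {p : (H →L[ℂ] H) → Prop} {X : H →L[ℂ] H} (hX : IsTraceClass X)
    (nonneg : ∀ P : H →L[ℂ] H, 0 ≤ P → IsTraceClass P → p P)
    (add : ∀ S T : H →L[ℂ] H, IsTraceClass S → IsTraceClass T → p S → p T → p (S + T))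
    (smul : ∀ (c : ℂ) (T : H →L[ℂ] H), IsTraceClass T → p T → p (c • T)) : p X := by
  have sub : ∀ S T : H →L[ℂ] H, IsTraceClass S → IsTraceClass T → p S → p T → p (S - T) := by
    intro S T hS hT hpS hpT
    rw [sub_eq_add_neg, ← neg_one_smul ℂ T]
    exact add _ _ hS ((traceClass H H).smul_mem _ hT) hpS (smul _ _ hT hpT)
  have selfAdjoint : ∀ Y : H →L[ℂ] H, IsSelfAdjoint Y → IsTraceClass Y → p Y := by
    intro Y hs hY
    have hneg : IsTraceClass Y⁻ := by
      simpa using posPart ((traceClass H H).neg_mem hY) hs.neg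
    rw [← CFC.posPart_sub_negPart Y hs]
    exact sub _ _ (hY.posPart hs) hneg (nonneg _ (CFC.posPart_nonneg Y) (hY.posPart hs))
      (nonneg _ (CFC.negPart_nonneg Y) hneg)
  have hre : IsTraceClass (realPart X : H →L[ℂ] H) := by
    rw [realPart_apply_coe]
    exact ((traceClass H H).restrictScalars ℝ).smul_mem _ ((traceClass H H).add_mem hX hX.adjoint)
  have him : IsTraceClass (imaginaryPart X : H →L[ℂ] H) := by
    rw [imaginaryPart_apply_coe]
    exact (traceClass H H).smul_mem _ (((traceClass H H).restrictScalars ℝ).smul_mem _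
      ((traceClass H H).sub_mem hX hX.adjoint))
  rw [← realPart_add_I_smul_imaginaryPart X]
  exact add _ _ hre ((traceClass H H).smul_mem _ him) (selfAdjoint _ (realPart X).2 hre)
    (smul _ _ him (selfAdjoint _ (imaginaryPart X).2 him))

end IsTraceClass

end TraceClass

section WeakSums

variable {ι κ : Type*} {H K : Type*} [NormedAddCommGroup H] [InnerProductSpace ℂ H]
  [NormedAddCommGroup K] [InnerProductSpace ℂ K]

/-- Unconditional convergence of a series of operators in the weak operator topology. -/
def HasSumWOT (f : ι → H →L[ℂ] K) (T : H →L[ℂ] K) : Prop :=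
  ∀ x y, HasSum (fun k => ⟪x, f k y⟫) ⟪x, T y⟫

theorem hasSumWOT_of_hasSum_apply {f : ι → H →L[ℂ] K} {T : H →L[ℂ] K}
    (h : ∀ y, HasSum (fun k => f k y) (T y)) : HasSumWOT f T :=
  fun x y => (h y).mapL (innerSL ℂ x)

theorem HasSumWOT.isPositive {f : ι → H →L[ℂ] H} {T : H →L[ℂ] H} (h : HasSumWOT f T)
    (hf : ∀ k, (f k).IsPositive) : T.IsPositive := by
  refine ⟨fun x y => ?_, fun x => ?_⟩
  · rw [coe_coe, ← inner_conj_symm]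
    refine (h y x).star.unique ?_
    simpa only [← starRingEnd_apply, inner_conj_symm, (hf _).inner_left_eq_inner_right]
      using h x y
  · rw [reApplyInnerSelf, inner_re_symm]
    exact (Complex.hasSum_re (h x x)).nonneg fun k => (hf k).re_inner_nonneg_right x

theorem hasSumWOT_comp_equiv (e : ι ≃ κ) {f : κ → H →L[ℂ] K} {T : H →L[ℂ] K} :
    HasSumWOT (fun i => f (e i)) T ↔ HasSumWOT f T :=
  forall₂_congr fun x y => e.hasSum_iff (f := fun k => ⟪x, f k y⟫)

theorem HasSumWOT.prod {f : ι × κ → H →L[ℂ] K} {g : ι → H →L[ℂ] K} {T : H →L[ℂ] K}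
    (hf : ∀ i, HasSumWOT (fun k => f (i, k)) (g i)) (hg : HasSumWOT g T)
    (hs : ∀ x y, Summable fun p => ⟪x, f p y⟫) : HasSumWOT f T := fun x y => by
  rw [(hg x y).unique ((hs x y).hasSum.prod_fiberwise fun i => hf i x y)]
  exact (hs x y).hasSum

theorem inner_rankOne_apply (u x : K) (v y : H) : ⟪x, rankOne u v y⟫ = ⟪x, u⟫ * ⟪v, y⟫ := by
  simp [rankOne, mul_comm]

theorem inner_rankOne_self_apply (v x : H) :
    ⟪x, rankOne v v x⟫ = ((‖⟪v, x⟫‖ ^ 2 : ℝ) : ℂ) := by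
  rw [inner_rankOne_apply, ← inner_conj_symm x v, Complex.conj_mul', Complex.ofReal_pow]

theorem isPositive_rankOne_self (v : H) : (rankOne v v).IsPositive :=
  InnerProductSpace.isPositive_rankOne_self v

/-- `F = ∑ i, v i (v i)*` in the weak operator topology; for `F = 1` this says that `v` is a
Parseval frame. -/
def IsRankOneDecomposition (v : ι → H) (F : H →L[ℂ] H) : Prop :=
  HasSumWOT (fun i => rankOne (v i) (v i)) F

theorem isRankOneDecomposition_comp_equiv (e : ι ≃ κ) {v : κ → H} {F : H →L[ℂ] H} :
    IsRankOneDecomposition (v ∘ e) F ↔ IsRankOneDecomposition v F :=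
  hasSumWOT_comp_equiv e (f := fun k => rankOne (v k) (v k))

namespace IsRankOneDecomposition

variable {v : ι → H} {F : H →L[ℂ] H}

theorem isPositive (hv : IsRankOneDecomposition v F) : F.IsPositive :=
  HasSumWOT.isPositive hv fun i => isPositive_rankOne_self (v i)

theorem hasSum_ofReal_norm_inner_sq (hv : IsRankOneDecomposition v F) (x : H) :
    HasSum (fun i => ((‖⟪v i, x⟫‖ ^ 2 : ℝ) : ℂ)) ⟪x, F x⟫ := by
  simpa only [inner_rankOne_self_apply] using hv x x

theorem hasSum_norm_inner_sq (hv : IsRankOneDecomposition v F) (x : H) :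
    HasSum (fun i => ‖⟪v i, x⟫‖ ^ 2) ⟪x, F x⟫.re :=
  Complex.hasSum_re (hv.hasSum_ofReal_norm_inner_sq x)

theorem prod {v : ι × κ → H} {F : ι → H →L[ℂ] H} {G : H →L[ℂ] H}
    (hv : ∀ i, IsRankOneDecomposition (fun k => v (i, k)) (F i)) (hF : HasSumWOT F G) :
    IsRankOneDecomposition v G := by
  have hdiag : ∀ x, Summable fun p => ‖⟪v p, x⟫‖ ^ 2 := fun x =>
    (summable_prod_of_nonneg fun _ => sq_nonneg _).2
      ⟨fun i => ((hv i).hasSum_norm_inner_sq x).summable, by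
        simpa only [fun i => ((hv i).hasSum_norm_inner_sq x).tsum_eq] using
          (Complex.hasSum_re (hF x x)).summable⟩
  refine HasSumWOT.prod hv hF fun x y => .of_norm_bounded ((hdiag x).add (hdiag y)) fun p => ?_
  rw [inner_rankOne_apply, norm_mul, norm_inner_symm]
  nlinarith [sq_nonneg (‖⟪v p, x⟫‖ - ‖⟪v p, y⟫‖), sq_nonneg ‖⟪v p, x⟫‖, sq_nonneg ‖⟪v p, y⟫‖]

theorem norm_sum_smul_sq_le (hv : IsRankOneDecomposition v F) (c : ι → ℂ) (s : Finset ι) :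
    ‖∑ i ∈ s, c i • v i‖ ^ 2 ≤ ‖F‖ * ∑ i ∈ s, ‖c i‖ ^ 2 := by
  set z := ∑ i ∈ s, c i • v i with hz
  have hinner : ‖z‖ ^ 2 ≤ ∑ i ∈ s, ‖c i‖ * ‖⟪v i, z⟫‖ := by
    rw [← inner_self_eq_norm_sq (𝕜 := ℂ) z]
    conv_lhs => rw [hz, sum_inner]
    simp only [← hz]
    refine (RCLike.re_le_norm _).trans ((norm_sum_le _ _).trans_eq ?_)
    simp only [inner_smul_left, norm_mul, RCLike.norm_conj]
  have hbessel : ∑ i ∈ s, ‖⟪v i, z⟫‖ ^ 2 ≤ ‖F‖ * ‖z‖ ^ 2 := by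
    refine (sum_le_hasSum s (fun _ _ => sq_nonneg _) (hv.hasSum_norm_inner_sq z)).trans ?_
    calc ⟪z, F z⟫.re ≤ ‖z‖ * ‖F z‖ := re_inner_le_norm (𝕜 := ℂ) z (F z)
      _ ≤ ‖z‖ * (‖F‖ * ‖z‖) := by gcongr; exact F.le_opNorm z
      _ = ‖F‖ * ‖z‖ ^ 2 := by ring
  have hsq : (‖z‖ ^ 2) ^ 2 ≤ ‖F‖ * (∑ i ∈ s, ‖c i‖ ^ 2) * ‖z‖ ^ 2 :=
    calc (‖z‖ ^ 2) ^ 2 ≤ (∑ i ∈ s, ‖c i‖ * ‖⟪v i, z⟫‖) ^ 2 := by gcongr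
      _ ≤ (∑ i ∈ s, ‖c i‖ ^ 2) * ∑ i ∈ s, ‖⟪v i, z⟫‖ ^ 2 := Finset.sum_mul_sq_le_sq_mul_sq _ _ _
      _ ≤ (∑ i ∈ s, ‖c i‖ ^ 2) * (‖F‖ * ‖z‖ ^ 2) := by gcongr
      _ = ‖F‖ * (∑ i ∈ s, ‖c i‖ ^ 2) * ‖z‖ ^ 2 := by ring
  rcases (sq_nonneg ‖z‖).eq_or_lt with h | h
  · rw [← h]; positivity
  · rw [sq (‖z‖ ^ 2)] at hsq
    exact le_of_mul_le_mul_right hsq h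

theorem hasSum_apply [CompleteSpace H] (hv : IsRankOneDecomposition v F) (x : H) :
    HasSum (fun i => ⟪v i, x⟫ • v i) (F x) := by
  have hs : Summable fun i => ⟪v i, x⟫ • v i := by
    have hsq := ((hv.hasSum_norm_inner_sq x).summable.mul_left ‖F‖)
    rw [summable_iff_vanishing_norm] at hsq ⊢
    intro ε hε
    obtain ⟨s, hs⟩ := hsq (ε ^ 2) (by positivity)
    refine ⟨s, fun t ht => lt_of_pow_lt_pow_left₀ 2 hε.le ?_⟩
    calc ‖∑ i ∈ t, ⟪v i, x⟫ • v i‖ ^ 2 ≤ ∑ i ∈ t, ‖F‖ * ‖⟪v i, x⟫‖ ^ 2 := by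
          rw [← Finset.mul_sum]
          exact hv.norm_sum_smul_sq_le (fun i => ⟪v i, x⟫) t
      _ ≤ ‖∑ i ∈ t, ‖F‖ * ‖⟪v i, x⟫‖ ^ 2‖ := le_abs_self _
      _ < ε ^ 2 := hs t ht
  convert hs.hasSum using 1
  refine ext_inner_left ℂ fun y => (hv y x).unique ?_
  exact hs.hasSum.mapL (innerSL ℂ y)

theorem countable_support [TopologicalSpace.SeparableSpace H]
    (hv : IsRankOneDecomposition v F) : (Function.support v).Countable := by
  have hcount (n : ℕ) := (hv.hasSum_norm_inner_sq
    (TopologicalSpace.denseSeq H n)).summable.countable_support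
  refine (Set.countable_iUnion hcount).mono fun i hi => ?_
  by_contra hmem
  simp only [Set.mem_iUnion, Function.mem_support, ne_eq, not_exists, not_not, sq_eq_zero_iff,
    norm_eq_zero] at hmem
  exact hi ((TopologicalSpace.denseRange_denseSeq H).eq_zero_of_inner_left ℂ hmem)

theorem map [CompleteSpace H] [CompleteSpace K] (hv : IsRankOneDecomposition v F)
    (A : H →L[ℂ] K) :
    IsRankOneDecomposition (fun i => A (v i)) (A ∘L F ∘L adjoint A) := fun x y => by
  have h := hv (adjoint A x) (adjoint A y)
  simp only [inner_rankOne_apply] at h ⊢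
  simpa only [adjoint_inner_left, adjoint_inner_right, comp_apply] using h

end IsRankOneDecomposition

theorem isRankOneDecomposition_hilbertBasis (b : HilbertBasis ι ℂ H) :
    IsRankOneDecomposition b (1 : H →L[ℂ] H) := fun x y => by
  simpa only [inner_rankOne_apply, one_apply] using! b.hasSum_inner_mul_inner x y

theorem isRankOneDecomposition_sqrt [CompleteSpace H] {F : H →L[ℂ] H} (hF : 0 ≤ F) :
    IsRankOneDecomposition (fun i => CFC.sqrt F (stdONB H i)) F := by
  have h := (isRankOneDecomposition_hilbertBasis (stdONB H)).map (CFC.sqrt F)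
  rwa [(CFC.sqrt_nonneg F).isSelfAdjoint.adjoint_eq, one_def, id_comp, ← mul_def,
    CFC.sqrt_mul_sqrt_self F] at h

end WeakSums

section Trace

variable {ι κ : Type*} {H : Type*} [NormedAddCommGroup H] [InnerProductSpace ℂ H]

-- Both sums are `∑ i, ∑ k, |⟪v i, w k⟫|²`.
theorem IsRankOneDecomposition.hasSum_inner_comm {v : ι → H} {w : κ → H} {F P : H →L[ℂ] H}
    (hv : IsRankOneDecomposition v F) (hw : IsRankOneDecomposition w P) {t : ℂ}
    (h : HasSum (fun i => ⟪v i, P (v i)⟫) t) : HasSum (fun k => ⟪w k, F (w k)⟫) t := by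
  have hs : Summable fun p : ι × κ => ‖⟪w p.2, v p.1⟫‖ ^ 2 :=
    (summable_prod_of_nonneg fun _ => sq_nonneg _).2
      ⟨fun i => (hw.hasSum_norm_inner_sq (v i)).summable, by
        simpa only [fun i => (hw.hasSum_norm_inner_sq (v i)).tsum_eq] using
          (Complex.hasSum_re h).summable⟩
  have hsum := Complex.hasSum_ofReal.2 hs.hasSum
  have ht := (hsum.prod_fiberwise fun i => hw.hasSum_ofReal_norm_inner_sq (v i)).unique h
  rw [ht, ← (Equiv.prodComm κ ι).hasSum_iff] at hsum
  refine hsum.prod_fiberwise fun k => ?_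
  simpa only [Function.comp_apply, Equiv.prodComm_apply, Prod.swap_prod_mk,
    norm_inner_symm (w k)] using hv.hasSum_ofReal_norm_inner_sq (w k)

variable [CompleteSpace H]

theorem IsTraceClass.hasSum_Tr {X : H →L[ℂ] H} (hX : IsTraceClass X) :
    HasSum (fun i => ⟪stdONB H i, X (stdONB H i)⟫) (Tr X) :=
  (hX.summable_inner (stdONB H).orthonormal (stdONB H).orthonormal).hasSum

theorem Tr_add {X Y : H →L[ℂ] H} (hX : IsTraceClass X) (hY : IsTraceClass Y) :
    Tr (X + Y) = Tr X + Tr Y := by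
  refine ((traceClass H H).add_mem hX hY).hasSum_Tr.unique ?_
  simpa only [add_apply, inner_add_right] using hX.hasSum_Tr.add hY.hasSum_Tr

theorem Tr_smul (c : ℂ) (X : H →L[ℂ] H) : Tr (c • X) = c * Tr X := by
  simp only [Tr, smul_apply, inner_smul_right, tsum_mul_left]

theorem IsTraceClass.hasSum_inner_sqrt {X : H →L[ℂ] H} (hX : IsTraceClass X) {v : ι → H}
    {F : H →L[ℂ] H} (hv : IsRankOneDecomposition v F) :
    HasSum (fun i => ⟪v i, X (v i)⟫) (Tr (CFC.sqrt F * X * CFC.sqrt F)) := by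
  have hideal : ∀ {Y : H →L[ℂ] H}, IsTraceClass Y → IsTraceClass (CFC.sqrt F * Y * CFC.sqrt F) :=
    fun hY => (hY.const_mul _).mul_const _
  refine hX.induction_on_nonneg (fun P hP hPtc => ?_) (fun S T hS hT hsumS hsumT => ?_)
    fun c T _ hsum => ?_
  · have hF := isRankOneDecomposition_sqrt ((nonneg_iff_isPositive F).2 hv.isPositive)
    have hsqrt := isRankOneDecomposition_sqrt hP
    have hTr : HasSum (fun i => ⟪CFC.sqrt F (stdONB H i), P (CFC.sqrt F (stdONB H i))⟫)
        (Tr (CFC.sqrt F * P * CFC.sqrt F)) := by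
      have hadj := (CFC.sqrt_nonneg F).isSelfAdjoint.adjoint_eq
      convert (hideal hPtc).hasSum_Tr using 2 with i
      conv_lhs => rw [← hadj, adjoint_inner_left, hadj]
      rfl
    exact hsqrt.hasSum_inner_comm hv (hF.hasSum_inner_comm hsqrt hTr)
  · rw [mul_add, add_mul, Tr_add (hideal hS) (hideal hT)]
    simpa only [add_apply, inner_add_right] using hsumS.add hsumT
  · rw [mul_smul_comm, smul_mul_assoc, Tr_smul]
    simpa only [smul_apply, inner_smul_right] using hsum.mul_left c

theorem IsTraceClass.hasSum_inner_of_one {X : H →L[ℂ] H} (hX : IsTraceClass X) {v : ι → H}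
    (hv : IsRankOneDecomposition v 1) : HasSum (fun i => ⟪v i, X (v i)⟫) (Tr X) := by
  simpa only [CFC.sqrt_one, one_mul, mul_one] using hX.hasSum_inner_sqrt hv

theorem Tr_mul_comm_of_mem_unitary {X U : H →L[ℂ] H} (hX : IsTraceClass X)
    (hU : U ∈ unitary (H →L[ℂ] H)) : Tr (U * X) = Tr (X * U) := by
  have hU₁ : adjoint U ∘L U = 1 := Unitary.star_mul_self_of_mem hU
  have hU₂ : U ∘L adjoint U = 1 := Unitary.mul_star_self_of_mem hU
  have hframe : IsRankOneDecomposition (fun i => adjoint U (stdONB H i)) 1 := by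
    have h := (isRankOneDecomposition_hilbertBasis (stdONB H)).map (adjoint U)
    rwa [adjoint_adjoint, one_def, id_comp, hU₁] at h
  refine (hX.const_mul U).hasSum_Tr.unique ?_
  convert (hX.mul_const U).hasSum_inner_of_one hframe using 2 with i
  have hi : U (adjoint U (stdONB H i)) = stdONB H i := congr($hU₂ (stdONB H i))
  rw [mul_def, mul_def, comp_apply, comp_apply, hi, adjoint_inner_left]

theorem Tr_mul_comm {X : H →L[ℂ] H} (hX : IsTraceClass X) (A : H →L[ℂ] H) :
    Tr (A * X) = Tr (X * A) := by
  have hA : A ∈ Submodule.span ℂ (unitary (H →L[ℂ] H) : Set (H →L[ℂ] H)) := by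
    simp only [CStarAlgebra.span_unitary, Submodule.mem_top]
  induction hA using Submodule.span_induction with
  | mem U hU => exact Tr_mul_comm_of_mem_unitary hX hU
  | zero => rw [zero_mul, mul_zero]
  | add A B _ _ hA hB =>
    rw [add_mul, mul_add, Tr_add (hX.const_mul A) (hX.const_mul B),
      Tr_add (hX.mul_const A) (hX.mul_const B), hA, hB]
  | smul c A _ hA => rw [smul_mul_assoc, mul_smul_comm, Tr_smul, Tr_smul, hA]

theorem IsTraceClass.hasSum_inner {X : H →L[ℂ] H} (hX : IsTraceClass X) {v : ι → H}
    {F : H →L[ℂ] H} (hv : IsRankOneDecomposition v F) :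
    HasSum (fun i => ⟪v i, X (v i)⟫) (Tr (F * X)) := by
  have hF := (nonneg_iff_isPositive F).2 hv.isPositive
  have hcyclic : Tr (CFC.sqrt F * X * CFC.sqrt F) = Tr (F * X) := by
    rw [← Tr_mul_comm (hX.const_mul _), ← mul_assoc, CFC.sqrt_mul_sqrt_self F hF]
  exact hcyclic ▸ hX.hasSum_inner_sqrt hv

theorem Tr_rankOne (u v : H) : Tr (rankOne u v) = ⟪v, u⟫ := by
  have h := (stdONB H).hasSum_inner_mul_inner v u
  simp only [Tr, inner_rankOne_apply, ← h.tsum_eq, mul_comm]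

theorem Tr_rankOne_self_mul (v : H) (X : H →L[ℂ] H) : Tr (rankOne v v * X) = ⟪v, X v⟫ := by
  have h : rankOne v v * X = rankOne v (adjoint X v) := InnerProductSpace.rankOne_comp v v X
  rw [h, Tr_rankOne, adjoint_inner_left]

end Trace

section TraceNorm

variable {ι : Type*} {H K : Type*} [NormedAddCommGroup H] [InnerProductSpace ℂ H]
  [NormedAddCommGroup K] [InnerProductSpace ℂ K]

theorem sum_norm_inner_le_traceNorm {T : H →L[ℂ] K} (hT : IsTraceClass T) {n : ℕ} {e : Fin n → H}
    {f : Fin n → K} (he : Orthonormal ℂ e) (hf : Orthonormal ℂ f) :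
    ∑ i, ‖⟪f i, T (e i)⟫‖ ≤ traceNorm T := by
  obtain ⟨C, hC⟩ := hT
  refine le_csSup ⟨C, ?_⟩ ⟨n, e, f, he, hf, rfl⟩
  rintro _ ⟨m, e', f', he', hf', rfl⟩
  exact hC m e' f' he' hf'

theorem traceNorm_le {T : H →L[ℂ] K} {C : ℝ} (h0 : 0 ≤ C)
    (hC : ∀ (n : ℕ) (e : Fin n → H) (f : Fin n → K),
      Orthonormal ℂ e → Orthonormal ℂ f → ∑ i, ‖⟪f i, T (e i)⟫‖ ≤ C) : traceNorm T ≤ C := by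
  refine Real.sSup_le ?_ h0
  rintro _ ⟨n, e, f, he, hf, rfl⟩
  exact hC n e f he hf

theorem traceNorm_nonneg (T : H →L[ℂ] K) : 0 ≤ traceNorm T := by
  refine Real.sSup_nonneg ?_
  rintro _ ⟨n, e, f, -, -, rfl⟩
  exact Finset.sum_nonneg fun _ _ => norm_nonneg _

theorem exists_norm_eq_one_and_norm_smul_eq {E : Type*} [NormedAddCommGroup E] [NormedSpace ℂ E]
    [Nontrivial E] (x : E) : ∃ u : E, ‖u‖ = 1 ∧ (‖x‖ : ℂ) • u = x := by
  rcases eq_or_ne x 0 with rfl | hx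
  · obtain ⟨u, hu⟩ := exists_norm_eq E zero_le_one
    exact ⟨u, hu, by rw [norm_zero, Complex.ofReal_zero, zero_smul]⟩
  · exact ⟨NormedSpace.normalize x, NormedSpace.norm_normalize_eq_one_iff.2 hx, by
      rw [Complex.coe_smul, NormedSpace.norm_smul_normalize]⟩

theorem norm_inner_le_traceNorm {T : H →L[ℂ] K} (hT : IsTraceClass T) (x : K) (y : H) :
    ‖⟪x, T y⟫‖ ≤ ‖x‖ * ‖y‖ * traceNorm T := by
  rcases eq_or_ne x 0 with rfl | hx
  · simp
  rcases eq_or_ne y 0 with rfl | hy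
  · simp
  have := nontrivial_of_ne x 0 hx
  have := nontrivial_of_ne y 0 hy
  obtain ⟨f, hf, hfx⟩ := exists_norm_eq_one_and_norm_smul_eq x
  obtain ⟨e, he, hey⟩ := exists_norm_eq_one_and_norm_smul_eq y
  have h : ‖⟪f, T e⟫‖ ≤ traceNorm T := by
    simpa using sum_norm_inner_le_traceNorm hT (e := fun _ : Fin 1 => e) (f := fun _ => f)
      (orthonormal_subsingleton_iff.2 fun _ => he) (orthonormal_subsingleton_iff.2 fun _ => hf)
  calc ‖⟪x, T y⟫‖ = ‖x‖ * ‖y‖ * ‖⟪f, T e⟫‖ := by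
        conv_lhs => rw [← hfx, ← hey]
        simp only [map_smul, inner_smul_left, inner_smul_right, norm_mul, RCLike.norm_conj,
          Complex.norm_real, norm_norm, mul_assoc, mul_left_comm ‖y‖]
    _ ≤ ‖x‖ * ‖y‖ * traceNorm T := by gcongr

theorem sum_norm_inner_rankOne_le (u : K) (v : H) {n : ℕ} {e : Fin n → H} {f : Fin n → K}
    (he : Orthonormal ℂ e) (hf : Orthonormal ℂ f) :
    ∑ i, ‖⟪f i, rankOne u v (e i)⟫‖ ≤ ‖u‖ * ‖v‖ := by
  refine le_of_sq_le_sq ?_ (by positivity)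
  calc (∑ i, ‖⟪f i, rankOne u v (e i)⟫‖) ^ 2 = (∑ i, ‖⟪f i, u⟫‖ * ‖⟪e i, v⟫‖) ^ 2 := by
        simp only [inner_rankOne_apply, norm_mul, norm_inner_symm v]
    _ ≤ (∑ i, ‖⟪f i, u⟫‖ ^ 2) * ∑ i, ‖⟪e i, v⟫‖ ^ 2 := Finset.sum_mul_sq_le_sq_mul_sq _ _ _
    _ ≤ ‖u‖ ^ 2 * ‖v‖ ^ 2 := by
        gcongr
        exacts [hf.sum_inner_products_le u, he.sum_inner_products_le v]
    _ = (‖u‖ * ‖v‖) ^ 2 := (mul_pow _ _ _).symm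

theorem isTraceClass_rankOne (u : K) (v : H) : IsTraceClass (rankOne u v) :=
  ⟨‖u‖ * ‖v‖, fun _ _ _ => sum_norm_inner_rankOne_le u v⟩

theorem traceNorm_smul_rankOne_le (c : ℂ) (u : K) (v : H) :
    traceNorm (c • rankOne u v) ≤ ‖c‖ * (‖u‖ * ‖v‖) := by
  refine traceNorm_le (by positivity) fun n e f he hf => ?_
  simpa only [smul_apply, inner_smul_right, norm_mul, Finset.mul_sum] using
    mul_le_mul_of_nonneg_left (sum_norm_inner_rankOne_le u v he hf) (norm_nonneg c)

theorem HasSumTN.hasSumWOT {f : ι → H →L[ℂ] K} {T : H →L[ℂ] K} (h : HasSumTN f T)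
    (hf : ∀ k, IsTraceClass (f k)) (hT : IsTraceClass T) : HasSumWOT f T := fun x y => by
  rw [HasSum, SummationFilter.unconditional_filter, tendsto_iff_norm_sub_tendsto_zero]
  refine squeeze_zero (fun _ => norm_nonneg _) (fun s => ?_)
    (mul_zero (‖x‖ * ‖y‖) ▸ h.const_mul (‖x‖ * ‖y‖))
  have hrem : IsTraceClass (T - ∑ k ∈ s, f k) :=
    (traceClass H K).sub_mem hT ((traceClass H K).sum_mem fun k _ => hf k)
  refine (norm_inner_le_traceNorm hrem x y).trans_eq' ?_
  rw [norm_sub_rev, sub_apply, inner_sub_right, sum_apply, inner_sum]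

theorem HasSumWOT.traceNorm_le_tsum {f : ι → H →L[ℂ] K} {T : H →L[ℂ] K} (h : HasSumWOT f T)
    (hf : ∀ k, IsTraceClass (f k)) (hs : Summable fun k => traceNorm (f k)) :
    traceNorm T ≤ ∑' k, traceNorm (f k) := by
  refine traceNorm_le (tsum_nonneg fun k => traceNorm_nonneg (f k)) fun n e f' he hf' => ?_
  have hle (k : ι) : ∑ i, ‖⟪f' i, f k (e i)⟫‖ ≤ traceNorm (f k) :=
    sum_norm_inner_le_traceNorm (hf k) he hf'
  have hsum (i : Fin n) : Summable fun k => ‖⟪f' i, f k (e i)⟫‖ :=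
    hs.of_nonneg_of_le (fun _ => norm_nonneg _) fun k => (hle k).trans'
      (Finset.single_le_sum (f := fun i => ‖⟪f' i, f k (e i)⟫‖) (fun _ _ => norm_nonneg _)
        (Finset.mem_univ i))
  calc ∑ i, ‖⟪f' i, T (e i)⟫‖ ≤ ∑ i, ∑' k, ‖⟪f' i, f k (e i)⟫‖ :=
        Finset.sum_le_sum fun i _ => (h (f' i) (e i)).tsum_eq ▸ norm_tsum_le_tsum_norm (hsum i)
    _ = ∑' k, ∑ i, ‖⟪f' i, f k (e i)⟫‖ := (Summable.tsum_finsetSum fun i _ => hsum i).symm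
    _ ≤ ∑' k, traceNorm (f k) := (summable_sum fun i _ => hsum i).tsum_le_tsum hle hs

theorem HasSumWOT.hasSumTN {f : ι → H →L[ℂ] K} {T : H →L[ℂ] K} (h : HasSumWOT f T)
    (hf : ∀ k, IsTraceClass (f k)) (hs : Summable fun k => traceNorm (f k)) : HasSumTN f T := by
  refine squeeze_zero (fun _ => traceNorm_nonneg _) (fun s => ?_)
    (tendsto_tsum_compl_atTop_zero fun k => traceNorm (f k))
  have hrem : HasSumWOT (fun k : {k // k ∉ s} => f k) (T - ∑ k ∈ s, f k) := fun x y => by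
    rw [sub_apply, inner_sub_right, sum_apply, inner_sum]
    exact s.hasSum_iff_compl.1 (h x y)
  exact hrem.traceNorm_le_tsum (fun k => hf k) (hs.subtype _)

end TraceNorm

section CountableDecompositions

variable {ι : Type*} {H : Type*} [NormedAddCommGroup H] [InnerProductSpace ℂ H]

theorem IsRankOneDecomposition.exists_nat_of_countable_support {v : ι → H} {F : H →L[ℂ] H}
    (hv : IsRankOneDecomposition v F) (hc : (Function.support v).Countable) :
    ∃ v' : ℕ → H, IsRankOneDecomposition v' F := by
  have := hc.to_subtype
  obtain ⟨e, he⟩ := exists_injective_nat (Function.support v)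
  let φ (x y z : H) : ℂ := ⟪x, rankOne z z y⟫
  have hφ (x y : H) : φ x y 0 = 0 := by
    simp only [φ, inner_rankOne_apply, inner_zero_left, mul_zero]
  refine ⟨Function.extend e (fun i => v i) 0, fun x y => ?_⟩
  have hext : φ x y ∘ Function.extend e (fun i => v i) 0 =
      Function.extend e (fun i : Function.support v => φ x y (v i)) 0 := by
    funext k
    rw [Function.comp_apply, Function.apply_extend (φ x y), Function.comp_def]
    congr 1
    exact funext fun _ => hφ x y
  change HasSum (φ x y ∘ Function.extend e (fun i => v i) 0) _
  rw [hext, hasSum_extend_zero he]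
  exact (hasSum_subtype_iff_of_support_subset (f := fun i => φ x y (v i))
    fun i hi hvi => hi ((congrArg (φ x y) hvi).trans (hφ x y))).2 (hv x y)

variable [CompleteSpace H]

theorem exists_nat_isRankOneDecomposition [TopologicalSpace.SeparableSpace H] {F : H →L[ℂ] H}
    (hF : F.IsPositive) : ∃ v : ℕ → H, IsRankOneDecomposition v F :=
  let h := isRankOneDecomposition_sqrt ((nonneg_iff_isPositive F).2 hF)
  h.exists_nat_of_countable_support h.countable_support

theorem IsRankOneDecomposition.hasSum_norm_sq {v : ι → H} {R : H →L[ℂ] H}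
    (hv : IsRankOneDecomposition v R) (hR : IsTraceClass R) :
    HasSum (fun i => ((‖v i‖ ^ 2 : ℝ) : ℂ)) (Tr R) := by
  have h := (isRankOneDecomposition_hilbertBasis (stdONB H)).hasSum_inner_comm hv hR.hasSum_Tr
  simpa [inner_self_eq_norm_sq_to_K] using h

theorem IsTraceClass.exists_nat_isRankOneDecomposition {R : H →L[ℂ] H} (hR : IsTraceClass R)
    (hpos : R.IsPositive) : ∃ v : ℕ → H, IsRankOneDecomposition v R := by
  have h := isRankOneDecomposition_sqrt ((nonneg_iff_isPositive R).2 hpos)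
  refine h.exists_nat_of_countable_support ?_
  simpa [Function.support] using (h.hasSum_norm_sq hR).summable.countable_support

end CountableDecompositions

section States

variable {H : Type*} [NormedAddCommGroup H] [InnerProductSpace ℂ H] [CompleteSpace H]

theorem isState_rankOne_self {u : H} (hu : ‖u‖ = 1) : IsState (rankOne u u) :=
  ⟨isTraceClass_rankOne u u, isPositive_rankOne_self u, by
    rw [Tr_rankOne, inner_self_eq_norm_sq_to_K, hu, RCLike.ofReal_one, one_pow]⟩

theorem IsState.nontrivial {R : H →L[ℂ] H} (hR : IsState R) : Nontrivial H := by
  by_contra! h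
  have hzero : Tr R = 0 := by simp [Tr, Subsingleton.elim _ (0 : H)]
  exact zero_ne_one (hzero.symm.trans hR.2.2)

theorem IsState.exists_isRankOneDecomposition_smul {R : H →L[ℂ] H} (hR : IsState R) :
    ∃ (u : ℕ → H) (c : ℕ → ℝ), (∀ j, ‖u j‖ = 1) ∧ HasSum (fun j => c j ^ 2) 1 ∧
      IsRankOneDecomposition (fun j => (c j : ℂ) • u j) R := by
  have := hR.nontrivial
  obtain ⟨w, hw⟩ := hR.1.exists_nat_isRankOneDecomposition hR.2.1
  choose u hu huw using fun j => exists_norm_eq_one_and_norm_smul_eq (w j)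
  refine ⟨u, fun j => ‖w j‖, hu, ?_, by simpa only [huw] using hw⟩
  rw [← Complex.hasSum_ofReal, Complex.ofReal_one, ← hR.2.2]
  exact hw.hasSum_norm_sq hR.1

end States

section RankOneForm

variable {H K : Type*} [NormedAddCommGroup H] [InnerProductSpace ℂ H]
  [NormedAddCommGroup K] [InnerProductSpace ℂ K]

theorem hasSum_mul_prod {ι κ 𝕜 : Type*} [RCLike 𝕜] {f : ι → 𝕜} {g : κ → 𝕜} {a b : 𝕜}
    (hf : HasSum f a) (hg : HasSum g b) :
    HasSum (fun p : ι × κ => f p.1 * g p.2) (a * b) :=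
  hf.mul hg (summable_mul_of_summable_norm hf.summable.norm hg.summable.norm)

theorem rankOne_ofReal_smul_self (c : ℝ) (u : K) :
    rankOne ((c : ℂ) • u) ((c : ℂ) • u) = ((c ^ 2 : ℝ) : ℂ) • rankOne u u := by
  ext y
  refine ext_inner_left ℂ fun x => ?_
  simp only [inner_rankOne_apply, smul_apply, inner_smul_left, inner_smul_right,
    Complex.conj_ofReal, Complex.ofReal_pow]
  ring

theorem inner_ofReal_smul_smul_rankOne (c : ℝ) (v : H) (X : H →L[ℂ] H) (u : K) :
    ⟪(c : ℂ) • v, X ((c : ℂ) • v)⟫ • rankOne u u =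
      ⟪v, X v⟫ • rankOne ((c : ℂ) • u) ((c : ℂ) • u) := by
  rw [rankOne_ofReal_smul_self, smul_smul, map_smul, inner_smul_left, inner_smul_right,
    Complex.conj_ofReal, Complex.ofReal_pow]
  congr 1
  ring

theorem IsRankOneDecomposition.smul_prod {ι κ : Type*} {v : ι → H} {F : H →L[ℂ] H}
    (hv : IsRankOneDecomposition v F) {c : κ → ℝ} (hc : HasSum (fun j => c j ^ 2) 1) :
    IsRankOneDecomposition (fun p : ι × κ => (c p.2 : ℂ) • v p.1) F := by
  refine .prod (fun i x y => ?_) hv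
  simpa only [rankOne_ofReal_smul_self, smul_apply, inner_smul_right, Complex.ofReal_one, one_mul]
    using (Complex.hasSum_ofReal.2 hc).mul_right ⟪x, rankOne (v i) (v i) y⟫

variable [CompleteSpace H]

theorem IsRankOneDecomposition.hasSumWOT_prod {ι κ : Type*} {v : ι → H} {F : H →L[ℂ] H}
    (hv : IsRankOneDecomposition v F) {u : κ → K} {c : κ → ℝ} {R : K →L[ℂ] K}
    (hu : IsRankOneDecomposition (fun j => (c j : ℂ) • u j) R)
    {X : H →L[ℂ] H} (hX : IsTraceClass X) :
    HasSumWOT (fun p : ι × κ => ⟪(c p.2 : ℂ) • v p.1, X ((c p.2 : ℂ) • v p.1)⟫ •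
      rankOne (u p.2) (u p.2)) (Tr (F * X) • R) := fun x y => by
  simpa only [inner_ofReal_smul_smul_rankOne, smul_apply, inner_smul_right] using
    hasSum_mul_prod (hX.hasSum_inner hv) (hu x y)

theorem summable_inner_smul_rankOne {ι : Type*} {v : ι → H} {u : ι → K} (hu : ∀ k, ‖u k‖ = 1)
    (hv : IsRankOneDecomposition v 1) {X : H →L[ℂ] H} (hX : IsTraceClass X) (x y : K) :
    Summable fun k => ⟪x, (⟪v k, X (v k)⟫ • rankOne (u k) (u k)) y⟫ := by
  refine .of_norm_bounded ((hX.hasSum_inner hv).summable.norm.mul_right (‖x‖ * ‖y‖)) fun k => ?_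
  rw [smul_apply, inner_smul_right, norm_mul, inner_rankOne_apply, norm_mul]
  gcongr
  · exact (norm_inner_le_norm _ _).trans_eq (by rw [hu, mul_one])
  · exact (norm_inner_le_norm _ _).trans_eq (by rw [hu, one_mul])

theorem HasSumWOT.hasSumTN_smul_rankOne {ι : Type*} {v : ι → H} {u : ι → K}
    (hu : ∀ k, ‖u k‖ = 1) (hv : IsRankOneDecomposition v 1) {X : H →L[ℂ] H} (hX : IsTraceClass X)
    {Y : K →L[ℂ] K} (hY : HasSumWOT (fun k => ⟪v k, X (v k)⟫ • rankOne (u k) (u k)) Y) :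
    HasSumTN (fun k => ⟪v k, X (v k)⟫ • rankOne (u k) (u k)) Y := by
  refine hY.hasSumTN (fun k => (traceClass K K).smul_mem _ (isTraceClass_rankOne _ _)) ?_
  refine .of_nonneg_of_le (fun _ => traceNorm_nonneg _) (fun k => ?_)
    (hX.hasSum_inner hv).summable.norm
  simpa only [hu, mul_one] using traceNorm_smul_rankOne_le ⟪v k, X (v k)⟫ (u k) (u k)

variable [CompleteSpace K]

theorem exists_rankOne_form_of_holevo_form [TopologicalSpace.SeparableSpace H]
    {R : ℕ → K →L[ℂ] K} {F : ℕ → H →L[ℂ] H} (hR : ∀ k, IsState (R k))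
    (hF : ∀ k, (F k).IsPositive) (hF1 : HasSumWOT F 1) :
    ∃ (u : ℕ → K) (v : ℕ → H), (∀ k, ‖u k‖ = 1) ∧ IsRankOneDecomposition v 1 ∧
      ∀ (X : H →L[ℂ] H) (Y : K →L[ℂ] K), IsTraceClass X →
        HasSumWOT (fun k => Tr (F k * X) • R k) Y →
        HasSumTN (fun k => ⟪v k, X (v k)⟫ • rankOne (u k) (u k)) Y := by
  choose w hw using fun k => exists_nat_isRankOneDecomposition (hF k)
  choose u c hu hc hcu using fun k => (hR k).exists_isRankOneDecomposition_smul
  let v (p : ℕ × ℕ × ℕ) : H := (c p.1 p.2.2 : ℂ) • w p.1 p.2.1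
  have hvF (k : ℕ) : IsRankOneDecomposition (fun p => v (k, p)) (F k) :=
    (hw k).smul_prod (c := c k) (hc k)
  have hv : IsRankOneDecomposition v 1 := .prod hvF hF1
  have hprod (k : ℕ) {X : H →L[ℂ] H} (hX : IsTraceClass X) : HasSumWOT (fun p : ℕ × ℕ =>
      ⟪v (k, p), X (v (k, p))⟫ • rankOne (u k p.2) (u k p.2)) (Tr (F k * X) • R k) :=
    (hw k).hasSumWOT_prod (u := u k) (c := c k) (hcu k) hX
  let e : ℕ ≃ ℕ × ℕ × ℕ := (Denumerable.eqv _).symm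
  have hve : IsRankOneDecomposition (v ∘ e) 1 := (isRankOneDecomposition_comp_equiv e).2 hv
  refine ⟨fun n => u (e n).1 (e n).2.2, v ∘ e, fun n => hu _ _, hve, fun X Y hX hY => ?_⟩
  have htotal : HasSumWOT (fun p => ⟪v p, X (v p)⟫ • rankOne (u p.1 p.2.2) (u p.1 p.2.2)) Y := by
    have hs := summable_inner_smul_rankOne (u := fun p : ℕ × ℕ × ℕ => u p.1 p.2.2)
      (fun p => hu p.1 p.2.2) hv hX
    exact .prod (fun k => hprod k hX) hY hs
  exact ((hasSumWOT_comp_equiv e).2 htotal).hasSumTN_smul_rankOne (v := v ∘ e)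
    (fun n => hu _ _) hve hX

theorem holevo_form_iff_rank_one_representation_general [TopologicalSpace.SeparableSpace H]
    (Φ : (H →L[ℂ] H) → (K →L[ℂ] K)) (hΦ : ∀ X, IsTraceClass X → IsTraceClass (Φ X)) :
    (∃ (R : ℕ → (K →L[ℂ] K)) (F : ℕ → (H →L[ℂ] H)),
        (∀ k, IsState (R k)) ∧ (∀ k, (F k).IsPositive) ∧
        (∀ x : H, HasSum (fun k => F k x) x) ∧
        ∀ X : H →L[ℂ] H, IsTraceClass X →
          HasSumTN (fun k => Tr (F k * X) • R k) (Φ X)) ↔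
    (∃ (u : ℕ → K) (v : ℕ → H),
        (∀ k, ‖u k‖ = 1) ∧
        (∀ x : H, HasSum (fun k => ⟪v k, x⟫ • v k) x) ∧
        ∀ X : H →L[ℂ] H, IsTraceClass X →
          HasSumTN (fun k => ⟪v k, X (v k)⟫ • rankOne (u k) (u k)) (Φ X)) := by
  constructor
  · rintro ⟨R, F, hR, hF, hF1, hΦRF⟩
    obtain ⟨u, v, hu, hv, huv⟩ :=
      exists_rankOne_form_of_holevo_form hR hF (hasSumWOT_of_hasSum_apply hF1)
    refine ⟨u, v, hu, hv.hasSum_apply, fun X hX => huv X (Φ X) hX ?_⟩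
    exact (hΦRF X hX).hasSumWOT (fun k => (traceClass K K).smul_mem _ (hR k).1) (hΦ X hX)
  · rintro ⟨u, v, hu, hv, hΦuv⟩
    refine ⟨fun k => rankOne (u k) (u k), fun k => rankOne (v k) (v k),
      fun k => isState_rankOne_self (hu k), fun k => isPositive_rankOne_self (v k), hv, ?_⟩
    simpa only [Tr_rankOne_self_mul] using hΦuv

end RankOneForm

/-- A quantum channel between trace-class operators on separable
Hilbert spaces admits a Holevo form iff it admits an operator-sum representation
by rank-one operations. -/
theorem holevo_form_iff_rank_one_representation
    {H K : Type*} [NormedAddCommGroup H] [InnerProductSpace ℂ H] [CompleteSpace H]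
    [TopologicalSpace.SeparableSpace H]
    [NormedAddCommGroup K] [InnerProductSpace ℂ K] [CompleteSpace K]
    [TopologicalSpace.SeparableSpace K]
    (Φ : (H →L[ℂ] H) →ₗ[ℂ] (K →L[ℂ] K)) (hΦ : IsChannel Φ) :
    (∃ (R : ℕ → (K →L[ℂ] K)) (F : ℕ → (H →L[ℂ] H)),
        (∀ k, IsState (R k)) ∧ (∀ k, (F k).IsPositive) ∧
        (∀ x : H, HasSum (fun k => F k x) x) ∧
        ∀ X : H →L[ℂ] H, IsTraceClass X →
          HasSumTN (fun k => Tr (F k * X) • R k) (Φ X)) ↔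
    (∃ (u : ℕ → K) (v : ℕ → H),
        (∀ k, ‖u k‖ = 1) ∧
        (∀ x : H, HasSum (fun k => ⟪v k, x⟫ • v k) x) ∧
        ∀ X : H →L[ℂ] H, IsTraceClass X →
          HasSumTN (fun k => ⟪v k, X (v k)⟫ • rankOne (u k) (u k)) (Φ X)) :=
  holevo_form_iff_rank_one_representation_general Φ hΦ.maps_traceClass

end
end

section
/- Let H and K be complex separable Hilbert spaces and let Φ: T(H) → T(K) be a strongly entanglement breaking quantum channel. Then there exist a Hilbert space E, an isometry U: H → E, and a weak*-weak* continuous positive linear map Ψ: B(K) → B(E) whose range is commutative under operator multiplication, such that Φ(X) = Ψ_*(U X U*) for all X ∈ T(H), where Ψ_*: T(E) → T(K) is the predual map of Ψ, characterized by Tr(Ψ(Y) Z) = Tr(Y Ψ_*(Z)) for all Z ∈ T(E), Y ∈ B(K). -/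
noncomputable section

open scoped ComplexInnerProductSpace
open ContinuousLinearMap Filter Topology

/-- `Φ` dilates, via an isometry `U : H → E`, to the predual `Ψ_*` of a weak*-weak*
continuous positive map `Ψ : B(K) → B(E)` with commutative range:
`Φ(X) = Ψ_*(U X U*)`. -/
def IsDilationOf (H K E : Type*)
    [NormedAddCommGroup H] [InnerProductSpace ℂ H] [CompleteSpace H]
    [NormedAddCommGroup K] [InnerProductSpace ℂ K] [CompleteSpace K]
    [NormedAddCommGroup E] [InnerProductSpace ℂ E] [CompleteSpace E]
    (Φ : (H →L[ℂ] H) →ₗ[ℂ] (K →L[ℂ] K)) : Prop :=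
  ∃ (U : H →L[ℂ] E) (Ψ : (K →L[ℂ] K) →ₗ[ℂ] (E →L[ℂ] E))
      (Ψst : (E →L[ℂ] E) →ₗ[ℂ] (K →L[ℂ] K)),
    (∀ x : H, ‖U x‖ = ‖x‖) ∧
    (∀ Y : K →L[ℂ] K, Y.IsPositive → (Ψ Y).IsPositive) ∧
    (@Continuous _ _ (weakStarTopology K) (weakStarTopology E)
      (Ψ : (K →L[ℂ] K) → (E →L[ℂ] E))) ∧
    (∀ Y₁ Y₂ : K →L[ℂ] K, Ψ Y₁ * Ψ Y₂ = Ψ Y₂ * Ψ Y₁) ∧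
    (∀ Z : E →L[ℂ] E, IsTraceClass Z → IsTraceClass (Ψst Z)) ∧
    (∀ (Z : E →L[ℂ] E) (Y : K →L[ℂ] K), IsTraceClass Z →
      Tr (Ψ Y * Z) = Tr (Y * Ψst Z)) ∧
    (∀ X : H →L[ℂ] H, IsTraceClass X →
      Φ X = Ψst (U ∘L X ∘L ContinuousLinearMap.adjoint U))

open scoped InnerProduct lp

/-!
Write each effect as `Fₖ = Sₖ²` and fix a Hilbert basis `b` of `H`. For trace-class `X`,
`Tr (Fₖ X) = ∑ⱼ ⟪Sₖ bⱼ, X (Sₖ bⱼ)⟫`, and since `∑ₖ Fₖ = I` the vectors `vₚ = Sₖ bⱼ`, `p = (k, j)`,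
form a Parseval frame. Hence `Φ(X) = ∑ₚ ⟪vₚ, X vₚ⟫ Rₚ` with `Rₚ = Rₖ`, where `⟪vₚ, X vₚ⟫` is the
`p`-th diagonal entry of `U X U*` for the analysis isometry `U : H → ℓ²(P)` of the frame. Reading
off the diagonal of `Z` and mixing the states `Rₚ` accordingly is the predual of
`Ψ : Y ↦ diag (Tr (Y Rₚ))`, whose range consists of commuting diagonal operators.

Traces of trace-class operators are computed from absolutely convergent representations
`T = ∑ᵢ ⟪cᵢ, ·⟫ aᵢ`. They exist by the polar decomposition `T = W S²`: expanding in a Hilbert basis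
`(eᵢ)`, `T = ∑ᵢ ⟪S eᵢ, ·⟫ W S eᵢ` with `∑ᵢ ‖S eᵢ‖² = ∑ᵢ ⟪W eᵢ, T eᵢ⟫` finite.
-/

section Nuclear

variable {H K L : Type*} [NormedAddCommGroup H] [InnerProductSpace ℂ H]
  [NormedAddCommGroup K] [InnerProductSpace ℂ K] [NormedAddCommGroup L] [InnerProductSpace ℂ L]
  {ι κ : Type*}

lemma sum_norm_inner_mul_inner_le {e : ι → H} {f : ι → K}
    (he : Orthonormal ℂ e) (hf : Orthonormal ℂ f) (x : K) (y : H) (s : Finset ι) :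
    ∑ i ∈ s, ‖⟪y, e i⟫ * ⟪f i, x⟫‖ ≤ ‖x‖ * ‖y‖ := by
  have hy : ∑ i ∈ s, ‖⟪y, e i⟫‖ ^ 2 ≤ ‖y‖ ^ 2 := by
    simpa only [norm_inner_symm] using he.sum_inner_products_le y (s := s)
  have hx : ∑ i ∈ s, ‖⟪f i, x⟫‖ ^ 2 ≤ ‖x‖ ^ 2 := hf.sum_inner_products_le x
  calc ∑ i ∈ s, ‖⟪y, e i⟫ * ⟪f i, x⟫‖ = ∑ i ∈ s, ‖⟪y, e i⟫‖ * ‖⟪f i, x⟫‖ := by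
        simp only [norm_mul]
    _ ≤ √(∑ i ∈ s, ‖⟪y, e i⟫‖ ^ 2) * √(∑ i ∈ s, ‖⟪f i, x⟫‖ ^ 2) :=
        Real.sum_mul_le_sqrt_mul_sqrt s _ _
    _ ≤ ‖y‖ * ‖x‖ := by
        gcongr <;> rw [Real.sqrt_le_left (norm_nonneg _)] <;> assumption
    _ = ‖x‖ * ‖y‖ := mul_comm _ _

/-- A nuclear representation `T = ∑ i, ⟪c i, ·⟫ a i` of an operator, absolutely convergent in
trace norm. -/
structure IsNuclearRep (T : H →L[ℂ] K) (a : ι → K) (c : ι → H) : Prop where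
  summable : Summable fun i => ‖a i‖ * ‖c i‖
  hasSum : ∀ x, HasSum (fun i => ⟪c i, x⟫ • a i) (T x)

lemma isNuclearRep_comp [CompleteSpace H] [CompleteSpace L] (b : HilbertBasis ι ℂ L)
    (V : L →L[ℂ] K) (S : H →L[ℂ] L) (hs : Summable fun i => ‖V (b i)‖ * ‖(S†) (b i)‖) :
    IsNuclearRep (V ∘L S) (fun i => V (b i)) (fun i => (S†) (b i)) where
  summable := hs
  hasSum x := by
    simpa only [map_smul, b.repr_apply_apply, adjoint_inner_left, coe_comp,
      Function.comp_apply] using (b.hasSum_repr (S x)).mapL V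

namespace IsNuclearRep

variable {T : H →L[ℂ] K} {a : ι → K} {c : ι → H}

lemma hasSum_inner_apply (h : IsNuclearRep T a c) (x : H) (y : K) :
    HasSum (fun j => ⟪c j, x⟫ * ⟪y, a j⟫) ⟪y, T x⟫ := by
  simpa only [innerSL_apply_apply, inner_smul_right] using (h.hasSum x).mapL (innerSL ℂ y)

lemma summable_prod_inner_mul_inner (h : IsNuclearRep T a c) {e : κ → H} {f : κ → K}
    (he : Orthonormal ℂ e) (hf : Orthonormal ℂ f) :
    Summable fun p : ι × κ => ⟪c p.1, e p.2⟫ * ⟪f p.2, a p.1⟫ := by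
  have bound j (s : Finset κ) := sum_norm_inner_mul_inner_le he hf (a j) (c j) s
  refine .of_norm ((summable_prod_of_nonneg fun _ => norm_nonneg _).2
    ⟨fun j => summable_of_sum_le (fun _ => norm_nonneg _) (bound j), ?_⟩)
  exact h.summable.of_nonneg_of_le (fun _ => tsum_nonneg fun _ => norm_nonneg _)
    fun j => Real.tsum_le_of_sum_le (fun _ => norm_nonneg _) (bound j)

lemma isTraceClass (h : IsNuclearRep T a c) : IsTraceClass T := by
  refine ⟨∑' j, ‖a j‖ * ‖c j‖, fun n e f he hf => ?_⟩
  have bound j := sum_norm_inner_mul_inner_le he hf (a j) (c j) Finset.univ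
  have summable_row i : Summable fun j => ‖⟪c j, e i⟫ * ⟪f i, a j⟫‖ :=
    (h.hasSum_inner_apply (e i) (f i)).summable.norm
  calc ∑ i, ‖⟪f i, T (e i)⟫‖ ≤ ∑ i, ∑' j, ‖⟪c j, e i⟫ * ⟪f i, a j⟫‖ := by
        gcongr with i
        rw [← (h.hasSum_inner_apply (e i) (f i)).tsum_eq]
        exact norm_tsum_le_tsum_norm (summable_row i)
    _ = ∑' j, ∑ i, ‖⟪c j, e i⟫ * ⟪f i, a j⟫‖ :=
        (Summable.tsum_finsetSum fun i _ => summable_row i).symm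
    _ ≤ ∑' j, ‖a j‖ * ‖c j‖ :=
        (summable_sum fun i _ => summable_row i).tsum_le_tsum bound h.summable

lemma comp_left (h : IsNuclearRep T a c) (Y : K →L[ℂ] L) :
    IsNuclearRep (Y ∘L T) (fun i => Y (a i)) c where
  summable := by
    refine (h.summable.mul_left ‖Y‖).of_nonneg_of_le (fun _ => by positivity) fun i => ?_
    rw [← mul_assoc]
    gcongr
    exact Y.le_opNorm _
  hasSum x := by simpa only [coe_comp, Function.comp_apply, map_smul] using (h.hasSum x).mapL Y

lemma comp_right [CompleteSpace H] [CompleteSpace L] (h : IsNuclearRep T a c) (Y : L →L[ℂ] H) :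
    IsNuclearRep (T ∘L Y) a (fun i => (Y†) (c i)) where
  summable := by
    refine (h.summable.mul_right ‖Y†‖).of_nonneg_of_le (fun _ => by positivity) fun i => ?_
    rw [mul_assoc, mul_comm ‖c i‖]
    gcongr
    exact (Y†).le_opNorm _
  hasSum x := by simpa only [coe_comp, Function.comp_apply, adjoint_inner_left] using h.hasSum (Y x)

lemma const_smul (h : IsNuclearRep T a c) (z : ℂ) :
    IsNuclearRep (z • T) (fun i => z • a i) c where
  summable := by simpa only [norm_smul, mul_assoc] using h.summable.mul_left ‖z‖
  hasSum x := by simpa only [smul_comm z, smul_apply] using (h.hasSum x).const_smul z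

lemma norm_le (h : IsNuclearRep T a c) : ‖T‖ ≤ ∑' i, ‖a i‖ * ‖c i‖ := by
  refine T.opNorm_le_bound (tsum_nonneg fun _ => by positivity) fun x => ?_
  rw [← (h.hasSum x).tsum_eq]
  refine tsum_of_norm_bounded (h.summable.hasSum.mul_right ‖x‖) fun i => ?_
  rw [norm_smul, mul_comm, mul_assoc]
  gcongr
  exact norm_inner_le_norm _ _

lemma of_hasSum [CompleteSpace K] {P I : Type*} {S : P → H →L[ℂ] K} {a : P → I → K}
    {c : P → I → H} (h : ∀ p, IsNuclearRep (S p) (a p) (c p)) (hST : HasSum S T)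
    (hs : Summable fun q : P × I => ‖a q.1 q.2‖ * ‖c q.1 q.2‖) :
    IsNuclearRep T (fun q : P × I => a q.1 q.2) (fun q => c q.1 q.2) where
  summable := hs
  hasSum x := by
    have summable_terms : Summable fun q : P × I => ⟪c q.1 q.2, x⟫ • a q.1 q.2 := by
      refine .of_norm_bounded (hs.mul_right ‖x‖) fun q => ?_
      rw [norm_smul, mul_comm, mul_assoc]
      gcongr
      exact norm_inner_le_norm _ _
    have := summable_terms.hasSum.prod_fiberwise fun p => (h p).hasSum x
    have apply_eq := (hST.mapL (ContinuousLinearMap.apply ℂ K x)).unique this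
    exact apply_eq ▸ summable_terms.hasSum

end IsNuclearRep

namespace IsNuclearRep

variable {T : H →L[ℂ] H} {a c : ι → H}

lemma hasSum_inner_hilbertBasis (h : IsNuclearRep T a c) (b : HilbertBasis κ ℂ H) :
    HasSum (fun i => ⟪b i, T (b i)⟫) (∑' j, ⟪c j, a j⟫) := by
  have hs := (h.summable_prod_inner_mul_inner b.orthonormal b.orthonormal).hasSum
  have sum_columns := hs.prod_fiberwise fun j => b.hasSum_inner_mul_inner (c j) (a j)
  rw [sum_columns.tsum_eq]
  exact ((Equiv.prodComm κ ι).hasSum_iff.2 hs).prod_fiberwise fun i =>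
    h.hasSum_inner_apply (b i) (b i)

variable [CompleteSpace H]

lemma tr_eq (h : IsNuclearRep T a c) : Tr T = ∑' j, ⟪c j, a j⟫ :=
  (h.hasSum_inner_hilbertBasis (stdONB H)).tsum_eq

lemma hasSum_inner (h : IsNuclearRep T a c) : HasSum (fun j => ⟪c j, a j⟫) (Tr T) := by
  rw [h.tr_eq]
  refine (Summable.of_norm_bounded h.summable fun j => ?_).hasSum
  rw [mul_comm]
  exact norm_inner_le_norm _ _

end IsNuclearRep

end Nuclear

section TraceClass

variable {H K L : Type*} [NormedAddCommGroup H] [InnerProductSpace ℂ H]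
  [NormedAddCommGroup K] [InnerProductSpace ℂ K] [NormedAddCommGroup L] [InnerProductSpace ℂ L]

lemma IsTraceClass.summable_norm_inner {T : H →L[ℂ] K} (hT : IsTraceClass T) {κ : Type*}
    {e : κ → H} {f : κ → K} (he : Orthonormal ℂ e) (hf : Orthonormal ℂ f) :
    Summable fun i => ‖⟪f i, T (e i)⟫‖ := by
  obtain ⟨C, hC⟩ := hT
  refine summable_of_sum_le (c := C) (fun _ => norm_nonneg _) fun s => ?_
  have enum_injective : Function.Injective fun i : Fin s.card => (s.equivFin.symm i : κ) :=
    Subtype.val_injective.comp s.equivFin.symm.injective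
  calc ∑ i ∈ s, ‖⟪f i, T (e i)⟫‖ = ∑ i : s, ‖⟪f i, T (e i)⟫‖ := (s.sum_coe_sort _).symm
    _ = ∑ i, ‖⟪f (s.equivFin.symm i), T (e (s.equivFin.symm i))⟫‖ :=
        (s.equivFin.symm.sum_comp fun i : s => ‖⟪f i, T (e i)⟫‖).symm
    _ ≤ C := hC _ _ _ (he.comp _ enum_injective) (hf.comp _ enum_injective)

lemma exists_linearIsometry_closure_range [CompleteSpace K] {P : H →L[ℂ] L} {T : H →L[ℂ] K}
    (hPT : ∀ x, ‖P x‖ = ‖T x‖) :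
    ∃ W : P.range.topologicalClosure →ₗᵢ[ℂ] K,
      ∀ x, W ⟨P x, subset_closure ⟨x, rfl⟩⟩ = T x := by
  let P' : H →ₗ[ℂ] P.range.topologicalClosure :=
    (P : H →ₗ[ℂ] L).codRestrict _ fun x => subset_closure ⟨x, rfl⟩
  have denseRange_P' : DenseRange P' := by
    rw [DenseRange, Subtype.dense_iff]
    intro y hy
    rwa [← Set.range_comp]
  have hle : ∃ C, ∀ x, ‖T x‖ ≤ C * ‖P' x‖ := ⟨1, fun x => by rw [one_mul]; exact (hPT x).ge⟩
  let W := (T : H →ₗ[ℂ] K).extendOfNorm P'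
  have W_apply x : W (P' x) = T x := LinearMap.extendOfNorm_eq denseRange_P' hle x
  refine ⟨⟨W, fun y => ?_⟩, W_apply⟩
  induction y using denseRange_P'.induction_on with
  | hp => exact isClosed_eq (by fun_prop) (by fun_prop)
  | ih x => exact (congrArg _ (W_apply x)).trans (hPT x).symm

end TraceClass

section PolarDecomposition

universe u

variable {H : Type u} {K : Type*} [NormedAddCommGroup H] [InnerProductSpace ℂ H] [CompleteSpace H]
  [NormedAddCommGroup K] [InnerProductSpace ℂ K] [CompleteSpace K]

lemma exists_isPositive_comp_self_eq {T : H →L[ℂ] H} (hT : T.IsPositive) :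
    ∃ S : H →L[ℂ] H, S.IsPositive ∧ S ∘L S = T := by
  rw [← nonneg_iff_isPositive] at hT
  exact ⟨CFC.sqrt T, (nonneg_iff_isPositive _).1 (CFC.sqrt_nonneg T),
    CFC.sqrt_mul_sqrt_self T hT⟩

lemma norm_sq_eq_inner_comp_self {S : H →L[ℂ] H} (hS : IsSelfAdjoint S) (x : H) :
    ((‖S x‖ ^ 2 : ℝ) : ℂ) = ⟪x, (S ∘L S) x⟫ := by
  have symm : ⟪S x, S x⟫ = ⟪x, S (S x)⟫ := hS.isSymmetric x (S x)
  rw [coe_comp, Function.comp_apply, ← symm, inner_self_eq_norm_sq_to_K]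
  norm_cast

lemma range_le_closure_range_comp_self {S : H →L[ℂ] H} (hS : IsSelfAdjoint S) :
    S.range ≤ (S ∘L S).range.topologicalClosure := by
  have hker : (S ∘L S).ker = S.ker := by simpa only [hS.adjoint_eq] using S.ker_adjoint_comp_self
  have orthogonal_ker_eq : S.kerᗮ = (S ∘L S).range.topologicalClosure := by
    simpa only [adjoint_comp, hS.adjoint_eq, hker] using (S ∘L S).orthogonal_ker
  rw [← orthogonal_ker_eq, S.orthogonal_ker, hS.adjoint_eq]
  exact Submodule.le_topologicalClosure _

lemma exists_isPositive_norm_eq (T : H →L[ℂ] K) :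
    ∃ P : H →L[ℂ] H, P.IsPositive ∧ ∀ x, ‖P x‖ = ‖T x‖ := by
  obtain ⟨P, hP, hPT⟩ := exists_isPositive_comp_self_eq T.isPositive_adjoint_comp_self
  refine ⟨P, hP, fun x => ?_⟩
  have := congrArg RCLike.re (norm_sq_eq_inner_comp_self hP.isSelfAdjoint x)
  rw [hPT, ← T.apply_norm_sq_eq_inner_adjoint_right] at this
  exact (sq_eq_sq₀ (norm_nonneg _) (norm_nonneg _)).1 this

theorem IsTraceClass.exists_isNuclearRep {T : H →L[ℂ] K} (hT : IsTraceClass T) :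
    ∃ (ι : Type u) (a : ι → K) (c : ι → H), IsNuclearRep T a c := by
  obtain ⟨P, hP, hPT⟩ := exists_isPositive_norm_eq T
  obtain ⟨S, hS, hSP⟩ := exists_isPositive_comp_self_eq hP
  have S_mem x : S x ∈ P.range.topologicalClosure :=
    hSP ▸ range_le_closure_range_comp_self hS.isSelfAdjoint ⟨x, rfl⟩
  obtain ⟨W, hW⟩ := exists_linearIsometry_closure_range hPT
  have : CompleteSpace P.range.topologicalClosure :=
    P.range.isClosed_topologicalClosure.completeSpace_coe
  obtain ⟨w, b, -⟩ := exists_hilbertBasis ℂ P.range.topologicalClosure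
  let S' : H →L[ℂ] P.range.topologicalClosure := S.codRestrict _ S_mem
  have b_orthonormal : Orthonormal ℂ fun i => (b i : H) :=
    b.orthonormal.comp_linearIsometry (Submodule.subtypeₗᵢ _)
  have W_symm i : ⟪W (b i), T (b i)⟫ = ((‖S (b i)‖ ^ 2 : ℝ) : ℂ) := by
    rw [← hW, W.inner_map_map, norm_sq_eq_inner_comp_self hS.isSelfAdjoint, hSP]
    rfl
  have adjoint_S' i : (S'†) (b i) = S (b i) := ext_inner_right ℂ fun x =>
    (adjoint_inner_left S' x (b i)).trans (hS.isSymmetric (b i) x).symm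
  have factorization : (W.toContinuousLinearMap ∘L S' ∘L Submodule.subtypeL _) ∘L S' = T := by
    ext x
    rw [← hW]
    exact congrArg W (Subtype.ext (DFunLike.congr_fun hSP x))
  refine ⟨w, _, _, factorization ▸ isNuclearRep_comp b _ S' ?_⟩
  refine (hT.summable_norm_inner b_orthonormal
    (b.orthonormal.comp_linearIsometry W)).congr fun i => ?_
  rw [Function.comp_apply, W_symm, Complex.norm_real, Real.norm_of_nonneg (by positivity),
    adjoint_S', sq]
  exact congrArg (· * _) (W.norm_map (S' (b i))).symm

end PolarDecomposition

section Trace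

variable {H K L : Type*} [NormedAddCommGroup H] [InnerProductSpace ℂ H]
  [NormedAddCommGroup K] [InnerProductSpace ℂ K] [NormedAddCommGroup L] [InnerProductSpace ℂ L]

variable (H K) in
/-- The space `T(H, K)` of trace-class operators, as a subspace of the bounded operators. -/
def traceClassOperators : Submodule ℂ (H →L[ℂ] K) where
  carrier := {T | IsTraceClass T}
  zero_mem' := ⟨0, fun _ _ _ _ _ => by simp⟩
  add_mem' := by
    rintro S T ⟨C, hC⟩ ⟨D, hD⟩
    refine ⟨C + D, fun n e f he hf => ?_⟩
    calc ∑ i, ‖⟪f i, (S + T) (e i)⟫‖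
        ≤ ∑ i, (‖⟪f i, S (e i)⟫‖ + ‖⟪f i, T (e i)⟫‖) := by
          gcongr with i
          rw [add_apply, inner_add_right]
          exact norm_add_le _ _
      _ ≤ C + D := by
          rw [Finset.sum_add_distrib]
          exact add_le_add (hC n e f he hf) (hD n e f he hf)
  smul_mem' := by
    rintro z T ⟨C, hC⟩
    refine ⟨‖z‖ * C, fun n e f he hf => ?_⟩
    simp only [smul_apply, inner_smul_right, norm_mul, ← Finset.mul_sum]
    exact mul_le_mul_of_nonneg_left (hC n e f he hf) (norm_nonneg z)

lemma IsTraceClass.norm_le_traceNorm {T : H →L[ℂ] K} (hT : IsTraceClass T) :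
    ‖T‖ ≤ traceNorm T := by
  obtain ⟨C, hC⟩ := hT
  have le_traceNorm (n : ℕ) (e : Fin n → H) (f : Fin n → K) (he : Orthonormal ℂ e)
      (hf : Orthonormal ℂ f) : ∑ i, ‖⟪f i, T (e i)⟫‖ ≤ traceNorm T := by
    refine le_csSup ⟨C, ?_⟩ ⟨n, e, f, he, hf, rfl⟩
    rintro _ ⟨n, e, f, he, hf, rfl⟩
    exact hC n e f he hf
  have traceNorm_nonneg : 0 ≤ traceNorm T := by
    simpa using le_traceNorm 0 Fin.elim0 Fin.elim0 (by simp) (by simp)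
  refine T.opNorm_le_of_unit_norm traceNorm_nonneg fun x hx => ?_
  rcases eq_or_ne (T x) 0 with hTx | hTx
  · rwa [hTx, norm_zero]
  have norm_normalize : ‖((‖T x‖ : ℂ)⁻¹) • T x‖ = 1 := norm_smul_inv_norm hTx
  have inner_normalize : ‖⟪((‖T x‖ : ℂ)⁻¹) • T x, T x⟫‖ = ‖T x‖ := by
    rw [inner_smul_left, inner_self_eq_norm_sq_to_K]
    simp
    field_simp
  simpa only [Fin.sum_univ_one, inner_normalize] using
    le_traceNorm 1 (fun _ => x) (fun _ => (‖T x‖ : ℂ)⁻¹ • T x) ⟨fun _ => hx, Subsingleton.pairwise⟩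
      ⟨fun _ => norm_normalize, Subsingleton.pairwise⟩

lemma HasSumTN.hasSum {ι : Type*} {f : ι → H →L[ℂ] K} {T : H →L[ℂ] K} (h : HasSumTN f T)
    (hf : ∀ i, IsTraceClass (f i)) (hT : IsTraceClass T) : HasSum f T := by
  rw [HasSum, SummationFilter.unconditional_filter, tendsto_iff_norm_sub_tendsto_zero]
  refine squeeze_zero (fun _ => norm_nonneg _) (fun s => ?_) h
  rw [norm_sub_rev]
  exact IsTraceClass.norm_le_traceNorm <| (traceClassOperators H K).sub_mem hT <|
    sum_mem fun i _ => hf i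

namespace IsTraceClass

variable [CompleteSpace H] [CompleteSpace K] {T : H →L[ℂ] K}

lemma comp_left (hT : IsTraceClass T) (Y : K →L[ℂ] L) : IsTraceClass (Y ∘L T) := by
  obtain ⟨_, _, _, h⟩ := hT.exists_isNuclearRep
  exact (h.comp_left Y).isTraceClass

lemma comp_right [CompleteSpace L] (hT : IsTraceClass T) (Y : L →L[ℂ] H) :
    IsTraceClass (T ∘L Y) := by
  obtain ⟨_, _, _, h⟩ := hT.exists_isNuclearRep
  exact (h.comp_right Y).isTraceClass

lemma tr_comp_comm (hT : IsTraceClass T) (Y : K →L[ℂ] H) : Tr (Y ∘L T) = Tr (T ∘L Y) := by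
  obtain ⟨_, _, _, h⟩ := hT.exists_isNuclearRep
  rw [(h.comp_left Y).tr_eq, (h.comp_right Y).tr_eq]
  simp only [adjoint_inner_left]

lemma hasSum_tr {T : H →L[ℂ] H} (hT : IsTraceClass T) {κ : Type*} (b : HilbertBasis κ ℂ H) :
    HasSum (fun i => ⟪b i, T (b i)⟫) (Tr T) := by
  obtain ⟨_, _, _, h⟩ := hT.exists_isNuclearRep
  exact h.tr_eq ▸ h.hasSum_inner_hilbertBasis b

/-- The normal functional `Y ↦ Tr (Y T)` on `B(H)` given by a trace-class operator `T`. -/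
def normalFunctional {T : H →L[ℂ] H} (hT : IsTraceClass T) : (H →L[ℂ] H) →ₗ[ℂ] ℂ where
  toFun Y := Tr (Y * T)
  map_add' Y Z := by
    have hsum := ((hT.comp_left Y).hasSum_tr (stdONB H)).add ((hT.comp_left Z).hasSum_tr (stdONB H))
    simp only [← inner_add_right] at hsum
    exact ((hT.comp_left (Y + Z)).hasSum_tr (stdONB H)).unique hsum
  map_smul' z Y := by
    have hsum := ((hT.comp_left Y).hasSum_tr (stdONB H)).mul_left z
    simp only [← inner_smul_right] at hsum
    exact ((hT.comp_left (z • Y)).hasSum_tr (stdONB H)).unique hsum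

end IsTraceClass

end Trace

section State

variable {K : Type*} [NormedAddCommGroup K] [InnerProductSpace ℂ K] [CompleteSpace K]
  {R : K →L[ℂ] K}

lemma IsState.exists_isNuclearRep (hR : IsState R) :
    ∃ a : (exists_hilbertBasis ℂ K).choose → K,
      HasSum (fun i => ‖a i‖ ^ 2) 1 ∧ IsNuclearRep R a a := by
  obtain ⟨R_traceClass, R_pos, tr_R⟩ := hR
  obtain ⟨S, hS, rfl⟩ := exists_isPositive_comp_self_eq R_pos
  have norm_sum : HasSum (fun i => ‖S (stdONB K i)‖ ^ 2) 1 := by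
    have := R_traceClass.hasSum_tr (stdONB K)
    simp only [tr_R, ← norm_sq_eq_inner_comp_self hS.isSelfAdjoint] at this
    exact Complex.hasSum_ofReal.1 (by rwa [Complex.ofReal_one])
  have hrep := isNuclearRep_comp (stdONB K) S S
  rw [hS.isSelfAdjoint.adjoint_eq] at hrep
  exact ⟨_, norm_sum, hrep (by simpa only [sq] using norm_sum.summable)⟩

namespace IsState

lemma norm_tr_mul_le (hR : IsState R) (Y : K →L[ℂ] K) : ‖Tr (Y * R)‖ ≤ ‖Y‖ := by
  obtain ⟨a, norm_a, h⟩ := hR.exists_isNuclearRep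
  rw [mul_def, ← (h.comp_left Y).hasSum_inner.tsum_eq, ← mul_one ‖Y‖]
  refine tsum_of_norm_bounded (norm_a.mul_left ‖Y‖) fun i => ?_
  calc ‖⟪a i, Y (a i)⟫‖ ≤ ‖a i‖ * ‖Y (a i)‖ := norm_inner_le_norm _ _
    _ ≤ ‖a i‖ * (‖Y‖ * ‖a i‖) := by gcongr; exact Y.le_opNorm _
    _ = ‖Y‖ * ‖a i‖ ^ 2 := by ring

open scoped ComplexOrder in
lemma tr_mul_nonneg (hR : IsState R) {Y : K →L[ℂ] K} (hY : Y.IsPositive) : 0 ≤ Tr (Y * R) := by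
  obtain ⟨a, -, h⟩ := hR.exists_isNuclearRep
  exact (h.comp_left Y).hasSum_inner.nonneg fun i => hY.inner_nonneg_right (a i)

lemma norm_le_one (hR : IsState R) : ‖R‖ ≤ 1 := by
  obtain ⟨a, norm_a, h⟩ := hR.exists_isNuclearRep
  simpa only [← sq, norm_a.tsum_eq] using h.norm_le

end IsState

section Mixture

variable {P : Type*} {R : P → K →L[ℂ] K} {z : P → ℂ} {T : K →L[ℂ] K}

lemma summable_smul_of_isState (hR : ∀ p, IsState (R p)) (hz : Summable fun p => ‖z p‖) :
    Summable fun p => z p • R p :=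
  .of_norm_bounded hz fun p => by
    rw [norm_smul]
    exact mul_le_of_le_one_right (norm_nonneg _) (hR p).norm_le_one

lemma exists_isNuclearRep_of_hasSum_smul (hR : ∀ p, IsState (R p))
    (hz : Summable fun p => ‖z p‖) (hT : HasSum (fun p => z p • R p) T) :
    ∃ a : P → (exists_hilbertBasis ℂ K).choose → K,
      (∀ p, IsNuclearRep (R p) (a p) (a p)) ∧
        IsNuclearRep T (fun q : P × _ => z q.1 • a q.1 q.2) (fun q => a q.1 q.2) := by
  choose a norm_a h using fun p => (hR p).exists_isNuclearRep
  refine ⟨a, h, .of_hasSum (a := fun p i => z p • a p i) (fun p => (h p).const_smul (z p)) hT ?_⟩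
  have sum_row p : HasSum (fun i => ‖z p • a p i‖ * ‖a p i‖) ‖z p‖ := by
    simpa only [norm_smul, sq, mul_assoc, mul_one] using (norm_a p).mul_left ‖z p‖
  rw [summable_prod_of_nonneg fun _ => by positivity]
  exact ⟨fun p => (sum_row p).summable, by simpa only [(sum_row _).tsum_eq] using hz⟩

lemma isTraceClass_of_hasSum_smul (hR : ∀ p, IsState (R p)) (hz : Summable fun p => ‖z p‖)
    (hT : HasSum (fun p => z p • R p) T) : IsTraceClass T := by
  obtain ⟨a, -, h⟩ := exists_isNuclearRep_of_hasSum_smul hR hz hT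
  exact h.isTraceClass

lemma hasSum_tr_mul_of_hasSum_smul (hR : ∀ p, IsState (R p)) (hz : Summable fun p => ‖z p‖)
    (hT : HasSum (fun p => z p • R p) T) (Y : K →L[ℂ] K) :
    HasSum (fun p => z p * Tr (Y * R p)) (Tr (Y * T)) := by
  obtain ⟨a, ha, h⟩ := exists_isNuclearRep_of_hasSum_smul hR hz hT
  refine (h.comp_left Y).hasSum_inner.prod_fiberwise fun p => ?_
  simpa only [map_smul, inner_smul_right, mul_def] using
    ((ha p).comp_left Y).hasSum_inner.mul_left (z p)

end Mixture

end State

section Predual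

variable {K E : Type*} [NormedAddCommGroup K] [InnerProductSpace ℂ K] [CompleteSpace K]
  [NormedAddCommGroup E] [InnerProductSpace ℂ E] [CompleteSpace E]

lemma continuous_weakStarTopology_of_predual {Ψ : (K →L[ℂ] K) → (E →L[ℂ] E)}
    {Ψst : (E →L[ℂ] E) → (K →L[ℂ] K)} (hTC : ∀ Z, IsTraceClass Z → IsTraceClass (Ψst Z))
    (hdual : ∀ Z Y, IsTraceClass Z → Tr (Ψ Y * Z) = Tr (Y * Ψst Z)) :
    Continuous[weakStarTopology K, weakStarTopology E] Ψ := by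
  let := weakStarTopology K
  refine continuous_induced_rng.2 (continuous_pi (A := fun _ => ℂ) fun ⟨Z, hZ⟩ => ?_)
  have pairing_eq Y : Tr (Z * Ψ Y) = Tr (Ψst Z * Y) :=
    (hZ.tr_comp_comm (Ψ Y)).symm.trans ((hdual Z Y hZ).trans ((hTC Z hZ).tr_comp_comm Y))
  simp only [Function.comp_def, pairing_eq]
  exact continuous_pi_iff.1 (continuous_induced_dom (α := K →L[ℂ] K)
    (f := fun Y (X : {X : K →L[ℂ] K // IsTraceClass X}) => Tr (X.1 * Y))) ⟨Ψst Z, hTC Z hZ⟩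

/-- The standard Hilbert basis of `ℓ²(P)`. -/
def ell2Basis (P : Type*) : HilbertBasis P ℂ ℓ²(P, ℂ) :=
  .ofRepr (.refl ℂ _)

lemma inner_ell2Basis {P : Type*} (p : P) (x : ℓ²(P, ℂ)) : ⟪ell2Basis P p, x⟫ = x p :=
  ((ell2Basis P).repr_apply_apply x p).symm

variable {P : Type*} {R : P → K →L[ℂ] K}

lemma exists_linearMap_hasSum_diag_smul (hR : ∀ p, IsState (R p)) :
    ∃ Ψst : (ℓ²(P, ℂ) →L[ℂ] ℓ²(P, ℂ)) →ₗ[ℂ] (K →L[ℂ] K), ∀ Z, IsTraceClass Z →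
      HasSum (fun p => ⟪ell2Basis P p, Z (ell2Basis P p)⟫ • R p) (Ψst Z) := by
  let e := ell2Basis P
  have summable_diag (Z : traceClassOperators ℓ²(P, ℂ) ℓ²(P, ℂ)) :
      Summable fun p => ⟪e p, Z.1 (e p)⟫ • R p :=
    summable_smul_of_isState hR (IsTraceClass.summable_norm_inner Z.2 e.orthonormal e.orthonormal)
  let Ψst : traceClassOperators ℓ²(P, ℂ) ℓ²(P, ℂ) →ₗ[ℂ] (K →L[ℂ] K) :=
    { toFun Z := ∑' p, ⟪e p, Z.1 (e p)⟫ • R p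
      map_add' Z W := by
        rw [← (summable_diag Z).tsum_add (summable_diag W)]
        simp only [Submodule.coe_add, add_apply, inner_add_right, add_smul]
      map_smul' z Z := by
        rw [RingHom.id_apply, ← (summable_diag Z).tsum_const_smul z]
        simp only [Submodule.coe_smul, smul_apply, inner_smul_right, smul_smul] }
  -- `IsDilationOf` wants a linear map on all bounded operators; off the trace class any will do.
  obtain ⟨Ψ', hΨ'⟩ := LinearMap.exists_extend Ψst
  refine ⟨Ψ', fun Z hZ => ?_⟩
  have extends_Z : Ψ' Z = Ψst ⟨Z, hZ⟩ := LinearMap.congr_fun hΨ' ⟨Z, hZ⟩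
  exact extends_Z ▸ (summable_diag ⟨Z, hZ⟩).hasSum

/-- The map `Ψ : B(K) → B(ℓ²(P))` sending `Y` to the diagonal operator with the expectations
`Tr (Y Rₚ)` of `Y` in the states `Rₚ` as entries. -/
def expectationDiagonal (hR : ∀ p, IsState (R p)) :
    (K →L[ℂ] K) →ₗ[ℂ] (ℓ²(P, ℂ) →L[ℂ] ℓ²(P, ℂ)) where
  toFun Y := lp.mapCLM 2 (fun p => Tr (Y * R p) • ContinuousLinearMap.id ℂ ℂ) (norm_nonneg Y)
    fun p => by simpa [norm_smul] using (hR p).norm_tr_mul_le Y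
  map_add' Y Z := by
    ext x p
    exact (congrArg (· * x p) ((hR p).1.normalFunctional.map_add Y Z)).trans (add_mul _ _ _)
  map_smul' z Y := by
    ext x p
    exact (congrArg (· * x p) ((hR p).1.normalFunctional.map_smul z Y)).trans (mul_assoc _ _ _)

variable (hR : ∀ p, IsState (R p))

lemma expectationDiagonal_apply (Y : K →L[ℂ] K) (x : ℓ²(P, ℂ)) (p : P) :
    expectationDiagonal hR Y x p = Tr (Y * R p) * x p := rfl

lemma expectationDiagonal_mul_comm (Y Z : K →L[ℂ] K) :
    expectationDiagonal hR Y * expectationDiagonal hR Z =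
      expectationDiagonal hR Z * expectationDiagonal hR Y := by
  ext x p
  exact mul_left_comm _ _ _

open scoped ComplexOrder in
lemma isPositive_expectationDiagonal {Y : K →L[ℂ] K} (hY : Y.IsPositive) :
    (expectationDiagonal hR Y).IsPositive := by
  refine (isPositive_iff_complex _).2 fun x => ?_
  have term_nonneg p : 0 ≤ ⟪expectationDiagonal hR Y x p, x p⟫ := by
    have diag_nonneg := (hR p).tr_mul_nonneg hY
    rw [expectationDiagonal_apply, RCLike.inner_apply, map_mul,
      RCLike.conj_eq_iff_im.2 (Complex.nonneg_iff.1 diag_nonneg).2.symm, mul_left_comm]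
    exact mul_nonneg diag_nonneg (mul_star_self_nonneg (x p))
  have inner_nonneg := Complex.nonneg_iff.1 <|
    (lp.hasSum_inner (expectationDiagonal hR Y x) x).nonneg term_nonneg
  exact ⟨Complex.ext rfl inner_nonneg.2, inner_nonneg.1⟩

lemma tr_expectationDiagonal_mul {Z : ℓ²(P, ℂ) →L[ℂ] ℓ²(P, ℂ)} (hZ : IsTraceClass Z)
    {T : K →L[ℂ] K} (hT : HasSum (fun p => ⟪ell2Basis P p, Z (ell2Basis P p)⟫ • R p) T)
    (Y : K →L[ℂ] K) : Tr (expectationDiagonal hR Y * Z) = Tr (Y * T) := by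
  let e := ell2Basis P
  have diag_eq p : ⟪e p, (expectationDiagonal hR Y ∘L Z) (e p)⟫ =
      ⟪e p, Z (e p)⟫ * Tr (Y * R p) := by
    rw [coe_comp, Function.comp_apply, inner_ell2Basis, inner_ell2Basis, mul_comm]
    rfl
  have hasSum_diag := (hZ.comp_left (expectationDiagonal hR Y)).hasSum_tr e
  simp only [diag_eq] at hasSum_diag
  exact hasSum_diag.unique (hasSum_tr_mul_of_hasSum_smul hR
    (hZ.summable_norm_inner e.orthonormal e.orthonormal) hT Y)

end Predual

section ParsevalFrame

variable {H : Type*} [NormedAddCommGroup H] [InnerProductSpace ℂ H] {P : Type*} {v : P → H}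

/-- A Parseval frame: a family `v` with `∑ₚ |⟪vₚ, x⟫|² = ‖x‖²` for every vector `x`. -/
def IsParsevalFrame (v : P → H) : Prop :=
  ∀ x, HasSum (fun p => ‖⟪v p, x⟫‖ ^ 2) (‖x‖ ^ 2)

lemma isParsevalFrame_hilbertBasis {ι : Type*} (b : HilbertBasis ι ℂ H) : IsParsevalFrame b := by
  intro x
  simpa [b.repr_apply_apply] using lp.hasSum_norm (p := 2) (by simp) (b.repr x)

lemma isParsevalFrame_prod_adjoint {L ι κ : Type*} [NormedAddCommGroup L] [InnerProductSpace ℂ L]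
    [CompleteSpace L] [CompleteSpace H] {S : ι → H →L[ℂ] L}
    (hS : ∀ x, HasSum (fun k => ‖S k x‖ ^ 2) (‖x‖ ^ 2)) {w : κ → L} (hw : IsParsevalFrame w) :
    IsParsevalFrame fun q : ι × κ => ((S q.1)†) (w q.2) := by
  intro x
  simp only [adjoint_inner_left]
  have sum_row k := hw (S k x)
  have summable_prod : Summable fun q : ι × κ => ‖⟪w q.2, S q.1 x⟫‖ ^ 2 :=
    (summable_prod_of_nonneg fun _ => by positivity).2
      ⟨fun k => (sum_row k).summable, by simpa only [(sum_row _).tsum_eq] using (hS x).summable⟩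
  exact (summable_prod.hasSum.prod_fiberwise sum_row).unique (hS x) ▸ summable_prod.hasSum

namespace IsParsevalFrame

/-- The analysis operator `x ↦ (⟪vₚ, x⟫)ₚ` of a Parseval frame. -/
def analysis (hv : IsParsevalFrame v) : H →ₗᵢ[ℂ] ℓ²(P, ℂ) where
  toFun x := ⟨fun p => ⟪v p, x⟫, memℓp_gen (by simpa using (hv x).summable)⟩
  map_add' x y := by ext p; exact inner_add_right _ _ _
  map_smul' z x := by ext p; exact inner_smul_right _ _ _
  norm_map' x := by
    rw [← sq_eq_sq₀ (norm_nonneg _) (norm_nonneg _)]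
    refine HasSum.unique ?_ (hv x)
    simpa using lp.hasSum_norm (p := 2) (by simp)
      (⟨fun p => ⟪v p, x⟫, memℓp_gen (by simpa using (hv x).summable)⟩ : ℓ²(P, ℂ))

variable [CompleteSpace H]

lemma adjoint_analysis_ell2Basis (hv : IsParsevalFrame v) (p : P) :
    (hv.analysis.toContinuousLinearMap†) (ell2Basis P p) = v p :=
  ext_inner_right ℂ fun x => by
    rw [adjoint_inner_left, inner_ell2Basis]
    rfl

lemma inner_ell2Basis_conj_analysis (hv : IsParsevalFrame v) (X : H →L[ℂ] H) (p : P) :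
    ⟪ell2Basis P p, (hv.analysis.toContinuousLinearMap ∘L X ∘L
      hv.analysis.toContinuousLinearMap†) (ell2Basis P p)⟫ = ⟪v p, X (v p)⟫ := by
  rw [coe_comp, Function.comp_apply, ← adjoint_inner_left, coe_comp, Function.comp_apply,
    hv.adjoint_analysis_ell2Basis]

lemma summable_norm_inner (hv : IsParsevalFrame v) {X : H →L[ℂ] H} (hX : IsTraceClass X) :
    Summable fun p => ‖⟪v p, X (v p)⟫‖ := by
  simp only [← hv.inner_ell2Basis_conj_analysis]
  exact ((hX.comp_right _).comp_left _).summable_norm_inner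
    (ell2Basis P).orthonormal (ell2Basis P).orthonormal

end IsParsevalFrame

end ParsevalFrame

section Dilation

variable {H K : Type*} [NormedAddCommGroup H] [InnerProductSpace ℂ H] [CompleteSpace H]
  [NormedAddCommGroup K] [InnerProductSpace ℂ K] [CompleteSpace K]
  {Φ : (H →L[ℂ] H) →ₗ[ℂ] (K →L[ℂ] K)}

lemma IsSEB.exists_isParsevalFrame_hasSum {J : Type*} (b : HilbertBasis J ℂ H)
    (hΦ : ∀ X, IsTraceClass X → IsTraceClass (Φ X)) (hSEB : IsSEB Φ) :
    ∃ (v : ℕ × J → H) (R : ℕ × J → K →L[ℂ] K), IsParsevalFrame v ∧ (∀ p, IsState (R p)) ∧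
      ∀ X, IsTraceClass X → HasSum (fun p => ⟪v p, X (v p)⟫ • R p) (Φ X) := by
  obtain ⟨R, F, hR, hF, sum_F, hΦF⟩ := hSEB
  choose S S_pos S_comp_S using fun k => exists_isPositive_comp_self_eq (hF k)
  have S_adjoint k : (S k)† = S k := (S_pos k).isSelfAdjoint.adjoint_eq
  have inner_S_left k x y : ⟪S k x, y⟫ = ⟪x, S k y⟫ := (S_pos k).isSelfAdjoint.isSymmetric x y
  have sum_norm_S x : HasSum (fun k => ‖S k x‖ ^ 2) (‖x‖ ^ 2) := by
    rw [← Complex.hasSum_ofReal]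
    simp only [norm_sq_eq_inner_comp_self (S_pos _).isSelfAdjoint, S_comp_S]
    simpa [inner_self_eq_norm_sq_to_K] using (sum_F x).mapL (innerSL ℂ x)
  have frame := isParsevalFrame_prod_adjoint sum_norm_S (isParsevalFrame_hilbertBasis b)
  refine ⟨_, fun p => R p.1, frame, fun p => hR p.1, fun X hX => ?_⟩
  have tr_F_mul k : HasSum (fun j => ⟪((S k)†) (b j), X (((S k)†) (b j))⟫) (Tr (F k * X)) := by
    rw [mul_def, ← S_comp_S, comp_assoc, (hX.comp_left (S k)).tr_comp_comm]
    simpa only [S_adjoint, coe_comp, Function.comp_apply, inner_S_left] using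
      ((hX.comp_left (S k)).comp_right (S k)).hasSum_tr b
  have summable_prod := summable_smul_of_isState (fun p : ℕ × J => hR p.1)
    (frame.summable_norm_inner hX)
  have sum_rows : HasSum (fun k => Tr (F k * X) • R k) (Φ X) :=
    (hΦF X hX).hasSum (fun k => (traceClassOperators K K).smul_mem _ (hR k).1) (hΦ X hX)
  exact (summable_prod.hasSum.prod_fiberwise fun k => (tr_F_mul k).smul_const (R k)).unique
    sum_rows ▸ summable_prod.hasSum

lemma isDilationOf_of_isParsevalFrame {P : Type*} {v : P → H} {R : P → K →L[ℂ] K}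
    (hv : IsParsevalFrame v) (hR : ∀ p, IsState (R p))
    (hΦ : ∀ X, IsTraceClass X → HasSum (fun p => ⟪v p, X (v p)⟫ • R p) (Φ X)) :
    IsDilationOf H K ℓ²(P, ℂ) Φ := by
  obtain ⟨Ψst, hΨst⟩ := exists_linearMap_hasSum_diag_smul hR
  have Ψst_traceClass Z (hZ : IsTraceClass Z) : IsTraceClass (Ψst Z) :=
    isTraceClass_of_hasSum_smul hR (hZ.summable_norm_inner (ell2Basis P).orthonormal
      (ell2Basis P).orthonormal) (hΨst Z hZ)
  have duality Z Y (hZ : IsTraceClass Z) : Tr (expectationDiagonal hR Y * Z) = Tr (Y * Ψst Z) :=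
    tr_expectationDiagonal_mul hR hZ (hΨst Z hZ) Y
  refine ⟨hv.analysis.toContinuousLinearMap, expectationDiagonal hR, Ψst, hv.analysis.norm_map,
    fun _ => isPositive_expectationDiagonal hR,
    continuous_weakStarTopology_of_predual Ψst_traceClass duality,
    expectationDiagonal_mul_comm hR, Ψst_traceClass, duality, fun X hX => ?_⟩
  have sum_conj := hΨst _ ((hX.comp_right (hv.analysis.toContinuousLinearMap†)).comp_left
    hv.analysis.toContinuousLinearMap)
  simp only [hv.inner_ell2Basis_conj_analysis] at sum_conj
  exact (hΦ X hX).unique sum_conj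

theorem SEB_dilates_to_predual_of_commutative_range_map_general {J : Type*}
    (b : HilbertBasis J ℂ H) (hΦ : ∀ X, IsTraceClass X → IsTraceClass (Φ X)) (hSEB : IsSEB Φ) :
    IsDilationOf H K ℓ²(ℕ × J, ℂ) Φ := by
  obtain ⟨v, R, hv, hR, sum_Φ⟩ := hSEB.exists_isParsevalFrame_hasSum b hΦ
  exact isDilationOf_of_isParsevalFrame hv hR sum_Φ

end Dilation

section Separable

variable {H : Type*} [NormedAddCommGroup H] [InnerProductSpace ℂ H]
  [TopologicalSpace.SeparableSpace H]

lemma countable_of_orthonormal {ι : Type*} {e : ι → H} (he : Orthonormal ℂ e) : Countable ι := by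
  have disjoint_balls : Pairwise (Function.onFun Disjoint fun i => Metric.ball (e i) (1 / 2)) := by
    intro i j hij
    refine Metric.ball_disjoint_ball ?_
    have norm_sub_sq_eq : ‖e i - e j‖ ^ 2 = 2 := by
      rw [norm_sub_sq (𝕜 := ℂ), he.1, he.1, he.2 hij]
      norm_num
    rw [dist_eq_norm]
    nlinarith [norm_nonneg (e i - e j)]
  exact disjoint_balls.countable_of_isOpen_disjoint (fun _ => Metric.isOpen_ball)
    fun i => Metric.nonempty_ball.2 (by norm_num)

variable (H) in
lemma exists_hilbertBasis_of_separableSpace [CompleteSpace H] :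
    ∃ J : Type, Nonempty (HilbertBasis J ℂ H) := by
  obtain ⟨s, b, -⟩ := exists_hilbertBasis ℂ H
  have := countable_of_orthonormal b.orthonormal
  let σ := (equivShrink.{0} s).symm
  refine ⟨Shrink.{0} s, ⟨.mk (v := b ∘ σ) (b.orthonormal.comp σ σ.injective) ?_⟩⟩
  rw [σ.surjective.range_comp, b.dense_span]

end Separable

/-- Every strongly entanglement breaking channel dilates to the
predual of a weak*-weak* continuous positive map with commutative range. -/
theorem SEB_dilates_to_predual_of_commutative_range_map
    {H K : Type*} [NormedAddCommGroup H] [InnerProductSpace ℂ H] [CompleteSpace H]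
    [TopologicalSpace.SeparableSpace H]
    [NormedAddCommGroup K] [InnerProductSpace ℂ K] [CompleteSpace K]
    [TopologicalSpace.SeparableSpace K]
    (Φ : (H →L[ℂ] H) →ₗ[ℂ] (K →L[ℂ] K)) (hΦ : IsChannel Φ) (hSEB : IsSEB Φ) :
    ∃ (E : Type) (i₁ : NormedAddCommGroup E) (i₂ : @InnerProductSpace ℂ E _ i₁.toSeminormedAddCommGroup)
      (i₃ : @CompleteSpace E i₁.toMetricSpace.toPseudoMetricSpace.toUniformSpace),
      @IsDilationOf H K E _ _ _ _ _ _ i₁ i₂ i₃ Φ := by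
  obtain ⟨J, ⟨b⟩⟩ := exists_hilbertBasis_of_separableSpace H
  exact ⟨ℓ²(ℕ × J, ℂ), _, _, inferInstance,
    SEB_dilates_to_predual_of_commutative_range_map_general b hΦ.maps_traceClass hSEB⟩

end
end
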